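/- arXiv:math/0603035 — 5 statements merged into one kernel-verified Lean document; each statement's English description precedes it below -/
import Mathlib

section
/- Let d ≥ 1 and let Ω ⊆ ℝ^d be a box, i.e. a product of d open intervals (bounded or not). Let (f_ε)_{ε∈(0,1]} be a net of smooth functions f_ε : Ω → ℂ such that μ_{q,l}(f_ε) < +∞ for all q, l ∈ ℕ and such that for all q, l ∈ ℕ there exists N ∈ ℕ with μ_{q,l}(f_ε) = O(ε^{-N}) as ε → 0 (i.e. (f_ε) ∈ E_S(Ω)). If for all q ∈ ℕ and all p ∈ ℕ one has μ_{q,0}(f_ε) = O(ε^p) as ε → 0, then for all q, l ∈ ℕ and all p ∈ ℕ one has μ_{q,l}(f_ε) = O(ε^p) as ε → 0. In other words, N_S(Ω) = N_{S,*}(Ω) ∩ E_S(Ω). -/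
open MeasureTheory Filter

noncomputable def mu {E : Type*} [NormedAddCommGroup E] [NormedSpace ℝ E]
    (r : ℤ) (l : ℕ) (f : E → ℂ) : ENNReal :=
  ⨆ (x : E) (i : ℕ) (_ : i ≤ l),
    ENNReal.ofReal ((1 + ‖x‖) ^ r * ‖iteratedFDeriv ℝ i f x‖)

def IsOEps (g : ℝ → ENNReal) (h : ℝ → ℝ) : Prop :=
  ∃ C > (0:ℝ), ∃ η > (0:ℝ), ∀ ε : ℝ, 0 < ε → ε ≤ η → g ε ≤ ENNReal.ofReal (C * h ε)

def SchwartzLike {E : Type*} [NormedAddCommGroup E] [NormedSpace ℝ E] (f : E → ℂ) : Prop :=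
  ContDiff ℝ (⊤ : ℕ∞) f ∧ ∀ q l : ℕ, mu (q : ℤ) l f < ⊤

def TemperateGrowth' {E : Type*} [NormedAddCommGroup E] [NormedSpace ℝ E] (f : E → ℂ) : Prop :=
  ContDiff ℝ (⊤ : ℕ∞) f ∧ ∀ l : ℕ, ∃ q : ℕ, mu (-(q:ℤ)) l f < ⊤

def IsESNet {E : Type*} [NormedAddCommGroup E] [NormedSpace ℝ E] (f : ℝ → E → ℂ) : Prop :=
  (∀ ε ∈ Set.Ioc (0:ℝ) 1, SchwartzLike (f ε)) ∧
  ∀ q l : ℕ, ∃ N : ℕ, IsOEps (fun ε => mu (q:ℤ) l (f ε)) (fun ε => ε ^ (-(N:ℤ)))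

def IsNSNet {E : Type*} [NormedAddCommGroup E] [NormedSpace ℝ E] (f : ℝ → E → ℂ) : Prop :=
  (∀ ε ∈ Set.Ioc (0:ℝ) 1, SchwartzLike (f ε)) ∧
  ∀ q l p : ℕ, IsOEps (fun ε => mu (q:ℤ) l (f ε)) (fun ε => ε ^ p)

def IsEtauNet {E : Type*} [NormedAddCommGroup E] [NormedSpace ℝ E] (f : ℝ → E → ℂ) : Prop :=
  (∀ ε ∈ Set.Ioc (0:ℝ) 1, TemperateGrowth' (f ε)) ∧
  ∀ l : ℕ, ∃ q N : ℕ, IsOEps (fun ε => mu (-(q:ℤ)) l (f ε)) (fun ε => ε ^ (-(N:ℤ)))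

def IsNtauNet {E : Type*} [NormedAddCommGroup E] [NormedSpace ℝ E] (f : ℝ → E → ℂ) : Prop :=
  (∀ ε ∈ Set.Ioc (0:ℝ) 1, TemperateGrowth' (f ε)) ∧
  ∀ l : ℕ, ∃ q : ℕ, ∀ p : ℕ, IsOEps (fun ε => mu (-(q:ℤ)) l (f ε)) (fun ε => ε ^ p)

noncomputable def scaled {d : ℕ} (ρ : (Fin d → ℝ) → ℂ) (t : ℝ) (x : Fin d → ℝ) : ℂ :=
  ((t ^ (-(d:ℤ)) : ℝ) : ℂ) * ρ (t⁻¹ • x)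

def IsMollifier {d : ℕ} (ρ : SchwartzMap (Fin d → ℝ) ℂ) : Prop :=
  (∫ x : Fin d → ℝ, ρ x) = 1 ∧
  ∀ α : Fin d → ℕ, α ≠ 0 → (∫ x : Fin d → ℝ, (∏ j, (x j : ℂ) ^ (α j)) * ρ x) = 0

def MemLa (a : ℝ) (N : ℕ → ℝ) : Prop :=
  (∀ l, 0 ≤ N l) ∧
  ((a = 0 ∧ Filter.Tendsto (fun l : ℕ => N l / (l:ℝ)) Filter.atTop (nhds 0)) ∨
   (0 < a ∧ Filter.limsup (fun l : ℕ => N l / (l:ℝ)) Filter.atTop < a))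

def IsESLNet {E : Type*} [NormedAddCommGroup E] [NormedSpace ℝ E]
    (a : ℝ) (f : ℝ → E → ℂ) : Prop :=
  (∀ ε ∈ Set.Ioc (0:ℝ) 1, SchwartzLike (f ε)) ∧
  ∃ N : ℕ → ℝ, MemLa a N ∧
    ∀ q l : ℕ, IsOEps (fun ε => mu (q:ℤ) l (f ε)) (fun ε => ε ^ (-(N l)))

def IsEtauLNet {E : Type*} [NormedAddCommGroup E] [NormedSpace ℝ E]
    (c : ℝ) (f : ℝ → E → ℂ) : Prop :=
  (∀ ε ∈ Set.Ioc (0:ℝ) 1, TemperateGrowth' (f ε)) ∧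
  ∃ N : ℕ → ℝ, MemLa c N ∧ ∃ q : ℕ, ∀ l : ℕ,
    IsOEps (fun ε => mu (-(q:ℤ)) l (f ε)) (fun ε => ε ^ (-(N l)))

def IsESinfNet {E : Type*} [NormedAddCommGroup E] [NormedSpace ℝ E] (f : ℝ → E → ℂ) : Prop :=
  (∀ ε ∈ Set.Ioc (0:ℝ) 1, SchwartzLike (f ε)) ∧
  ∃ N : ℕ, ∀ q l : ℕ, IsOEps (fun ε => mu (q:ℤ) l (f ε)) (fun ε => ε ^ (-(N:ℤ)))

def ModerateNetMaps (m n : ℕ)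
    (L : ℝ → SchwartzMap (Fin n → ℝ) ℂ → ((Fin m → ℝ) → ℂ)) : Prop :=
  (∀ ε ∈ Set.Ioc (0:ℝ) 1, ∀ f, TemperateGrowth' (L ε f)) ∧
  ∀ l : ℕ, ∃ C : ℝ → ℝ, (∀ ε, 0 ≤ C ε) ∧
    (∃ N : ℕ, ∃ C₀ > (0:ℝ), ∃ η > (0:ℝ), ∀ ε : ℝ, 0 < ε → ε ≤ η → C ε ≤ C₀ * ε ^ (-(N:ℤ))) ∧
    ∃ p q l' : ℕ, ∃ η > (0:ℝ), ∀ ε : ℝ, 0 < ε → ε ≤ η →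
      ∀ f : SchwartzMap (Fin n → ℝ) ℂ,
        mu (-(p:ℤ)) l (L ε f) ≤ ENNReal.ofReal (C ε) * mu (q:ℤ) l' ⇑f

def NegligibleNetMaps (m n : ℕ)
    (L : ℝ → SchwartzMap (Fin n → ℝ) ℂ → ((Fin m → ℝ) → ℂ)) : Prop :=
  (∀ ε ∈ Set.Ioc (0:ℝ) 1, ∀ f, TemperateGrowth' (L ε f)) ∧
  ∀ l : ℕ, ∃ C : ℝ → ℝ, (∀ ε, 0 ≤ C ε) ∧
    (∀ p' : ℕ, ∃ C₀ > (0:ℝ), ∃ η > (0:ℝ), ∀ ε : ℝ, 0 < ε → ε ≤ η → C ε ≤ C₀ * ε ^ p') ∧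
    ∃ p q l' : ℕ, ∃ η > (0:ℝ), ∀ ε : ℝ, 0 < ε → ε ≤ η →
      ∀ f : SchwartzMap (Fin n → ℝ) ℂ,
        mu (-(p:ℤ)) l (L ε f) ≤ ENNReal.ofReal (C ε) * mu (q:ℤ) l' ⇑f

def StronglyModerateWith (m n : ℕ)
    (L : ℝ → SchwartzMap (Fin n → ℝ) ℂ → ((Fin m → ℝ) → ℂ))
    (lam : ℕ → ℕ) (r : ℕ → ℝ) : Prop :=
  (∀ ε ∈ Set.Ioc (0:ℝ) 1, ∀ f, TemperateGrowth' (L ε f)) ∧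
  (∀ l, 0 ≤ r l) ∧
  ∀ l : ℕ, ∃ C ≥ (0:ℝ), ∃ p q : ℕ, ∃ η > (0:ℝ), ∀ ε : ℝ, 0 < ε → ε ≤ η →
    ∀ f : SchwartzMap (Fin n → ℝ) ℂ,
      mu (-(p:ℤ)) l (L ε f) ≤ ENNReal.ofReal (C * ε ^ (-(r l))) * mu (q:ℤ) (lam l) ⇑f

def ContinuousIntoOM (m n : ℕ) (L : SchwartzMap (Fin n → ℝ) ℂ → ((Fin m → ℝ) → ℂ)) : Prop :=
  ∀ l : ℕ, ∃ C ≥ (0:ℝ), ∃ p q l' : ℕ, ∀ f,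
    mu (-(p:ℤ)) l (L f) ≤ ENNReal.ofReal C * mu (q:ℤ) l' ⇑f

noncomputable def muOn {d : ℕ} (Ω : Set (Fin d → ℝ)) (r : ℤ) (l : ℕ)
    (f : (Fin d → ℝ) → ℂ) : ENNReal :=
  ⨆ (x : Ω) (i : ℕ) (_ : i ≤ l),
    ENNReal.ofReal ((1 + ‖(x : Fin d → ℝ)‖) ^ r * ‖iteratedFDerivWithin ℝ i f Ω (x : Fin d → ℝ)‖)

def IsBox {d : ℕ} (Ω : Set (Fin d → ℝ)) : Prop :=
  ∃ I : Fin d → Set ℝ, (∀ j, IsOpen (I j) ∧ Convex ℝ (I j)) ∧ Ω = Set.univ.pi I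

def IsRegularSet (R : Set (ℕ → ℝ)) : Prop :=
  R.Nonempty ∧ (∀ N ∈ R, ∀ n, 0 ≤ N n) ∧
  (∀ N ∈ R, ∀ k : ℕ, ∃ N' ∈ R, ∀ n, N n + k ≤ N' n) ∧
  (∀ N₁ ∈ R, ∀ N₂ ∈ R, ∃ N ∈ R, ∀ n, max (N₁ n) (N₂ n) ≤ N n) ∧
  (∀ N₁ ∈ R, ∀ N₂ ∈ R, ∃ N ∈ R, ∀ l₁ l₂ : ℕ, N₁ l₁ + N₂ l₂ ≤ N (l₁ + l₂))

def IsESRNet {E : Type*} [NormedAddCommGroup E] [NormedSpace ℝ E]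
    (R : Set (ℕ → ℝ)) (f : ℝ → E → ℂ) : Prop :=
  (∀ ε ∈ Set.Ioc (0:ℝ) 1, SchwartzLike (f ε)) ∧
  ∃ N ∈ R, ∀ q l : ℕ, IsOEps (fun ε => mu (q:ℤ) l (f ε)) (fun ε => ε ^ (-(N l)))

def IsEtauRNet {E : Type*} [NormedAddCommGroup E] [NormedSpace ℝ E]
    (R : Set (ℕ → ℝ)) (f : ℝ → E → ℂ) : Prop :=
  (∀ ε ∈ Set.Ioc (0:ℝ) 1, TemperateGrowth' (f ε)) ∧
  ∃ N ∈ R, ∃ q : ℕ, ∀ l : ℕ,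
    IsOEps (fun ε => mu (-(q:ℤ)) l (f ε)) (fun ε => ε ^ (-(N l)))

noncomputable def pderiv' {d : ℕ} (j : Fin d) (f : (Fin d → ℝ) → ℂ) : (Fin d → ℝ) → ℂ :=
  fun x => fderiv ℝ f x (Pi.single j 1)

noncomputable def multiDeriv {d : ℕ} : List (Fin d) → ((Fin d → ℝ) → ℂ) → ((Fin d → ℝ) → ℂ)
  | [], f => f
  | j :: js, f => pderiv' j (multiDeriv js f)

section Landau

variable {E F : Type*} [NormedAddCommGroup E] [NormedSpace ℝ E]
  [NormedAddCommGroup F] [NormedSpace ℝ F]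

/-- Second-order Taylor estimate: along a segment inside `Ω`, a first-order increment of the `i`-th
derivative is controlled by bounds on the derivatives of order `i` and `i + 2`. -/
lemma norm_fderivWithin_iteratedFDerivWithin_apply_sub_le {Ω : Set E} (hΩ : UniqueDiffOn ℝ Ω)
    {f : E → F} (hf : ContDiffOn ℝ (⊤ : ℕ∞) f Ω) (i : ℕ) {x y : E} (hxy : segment ℝ x y ⊆ Ω)
    {A B : ℝ} (hA : ∀ z ∈ segment ℝ x y, ‖iteratedFDerivWithin ℝ i f Ω z‖ ≤ A)
    (hB : ∀ z ∈ segment ℝ x y, ‖iteratedFDerivWithin ℝ (i + 2) f Ω z‖ ≤ B) :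
    ‖fderivWithin ℝ (iteratedFDerivWithin ℝ i f Ω) Ω x (y - x)‖ ≤ 2 * A + B * ‖y - x‖ ^ 2 := by
  have hx := left_mem_segment ℝ x y
  have hy := right_mem_segment ℝ x y
  have hderiv (k : ℕ) : ∀ z ∈ segment ℝ x y, HasFDerivWithinAt (iteratedFDerivWithin ℝ k f Ω)
      (fderivWithin ℝ (iteratedFDerivWithin ℝ k f Ω) Ω z) (segment ℝ x y) z := fun z hz =>
    ((hf.differentiableOn_iteratedFDerivWithin (by exact_mod_cast ENat.natCast_lt_top k) hΩ z
      (hxy hz)).hasFDerivWithinAt).mono hxy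
  have hB0 : 0 ≤ B := (norm_nonneg _).trans (hB x hx)
  have hlip : ∀ z ∈ segment ℝ x y, ‖fderivWithin ℝ (iteratedFDerivWithin ℝ i f Ω) Ω z -
      fderivWithin ℝ (iteratedFDerivWithin ℝ i f Ω) Ω x‖ ≤ B * ‖y - x‖ := by
    intro z hz
    have hmean := (convex_segment x y).norm_image_sub_le_of_norm_hasFDerivWithin_le (C := B)
      (hderiv (i + 1))
      (fun w hw => norm_fderivWithin_iteratedFDerivWithin.trans_le (hB w hw)) hx hz
    rw [iteratedFDerivWithin_succ_eq_comp_left, Function.comp_apply, Function.comp_apply,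
      ← dist_eq_norm, LinearIsometryEquiv.dist_map, dist_eq_norm] at hmean
    refine hmean.trans (mul_le_mul_of_nonneg_left ?_ hB0)
    obtain ⟨θ, hθ, rfl⟩ := (segment_eq_image' ℝ x y).subset hz
    rw [add_sub_cancel_left, norm_smul, Real.norm_of_nonneg hθ.1]
    exact mul_le_of_le_one_left (norm_nonneg _) hθ.2
  have htaylor := (convex_segment x y).norm_image_sub_le_of_norm_hasFDerivWithin_le'
    (hderiv i) hlip hx hy
  have htri := norm_sub_le_norm_sub_add_norm_sub
    (fderivWithin ℝ (iteratedFDerivWithin ℝ i f Ω) Ω x (y - x))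
    (iteratedFDerivWithin ℝ i f Ω y - iteratedFDerivWithin ℝ i f Ω x) 0
  rw [sub_zero, sub_zero, norm_sub_rev] at htri
  have hdiff := norm_sub_le (iteratedFDerivWithin ℝ i f Ω y) (iteratedFDerivWithin ℝ i f Ω x)
  nlinarith [hA x hx, hA y hy]

end Landau

section Box

variable {d : ℕ} {Ω : Set (Fin d → ℝ)}

lemma IsBox.isOpen (hΩ : IsBox Ω) : IsOpen Ω := by
  obtain ⟨I, hI, rfl⟩ := hΩ
  exact isOpen_set_pi Set.finite_univ fun j _ => (hI j).1

lemma IsBox.convex (hΩ : IsBox Ω) : Convex ℝ Ω := by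
  obtain ⟨I, hI, rfl⟩ := hΩ
  exact convex_pi fun j _ => (hI j).2

/-- From every point of a box one can move by a uniform distance, forwards or backwards, parallel to
any given coordinate axis. -/
lemma IsBox.exists_uniform_step (hΩ : IsBox Ω) :
    ∃ δ > (0 : ℝ), ∀ x ∈ Ω, ∀ t : ℝ, 0 ≤ t → t ≤ δ → ∀ j : Fin d,
      x + Pi.single j t ∈ Ω ∨ x + Pi.single j (-t) ∈ Ω := by
  rcases Ω.eq_empty_or_nonempty with rfl | ⟨a, ha⟩
  · exact ⟨1, one_pos, by simp⟩
  obtain ⟨δ, hδ, hball⟩ := Metric.isOpen_iff.1 hΩ.isOpen a ha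
  obtain ⟨I, hI, rfl⟩ := hΩ
  refine ⟨δ / 2, half_pos hδ, fun x hx t ht0 ht j => ?_⟩
  have hstep : ∀ s : ℝ, |s| < δ → a j + s ∈ I j := fun s hs => by
    have hmem : a + Pi.single j s ∈ Set.univ.pi I := hball <| by
      simpa [mem_ball_iff_norm, Pi.norm_single] using hs
    simpa using hmem j trivial
  have hadd : ∀ s : ℝ, x j + s ∈ I j → x + Pi.single j s ∈ Set.univ.pi I := fun s hs k _ => by
    rcases eq_or_ne k j with rfl | hk
    · simpa using hs
    · simpa [hk] using hx k trivial
  have hord := (hI j).2.ordConnected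
  rcases le_total (x j) (a j) with h | h
  · refine .inl (hadd _ (hord.out (hx j trivial) (hstep t ?_) ⟨by linarith, by linarith⟩))
    rw [abs_of_nonneg ht0]; linarith
  · refine .inr (hadd _ (hord.out (hstep (-t) ?_) (hx j trivial) ⟨by linarith, by linarith⟩))
    rw [abs_neg, abs_of_nonneg ht0]; linarith

/-- The norm of a linear map on `ℝ^d` with the sup norm is at most the sum over the basis. -/
lemma ContinuousLinearMap.norm_le_sum_norm_apply_single {G : Type*} [NormedAddCommGroup G]
    [NormedSpace ℝ G] (φ : (Fin d → ℝ) →L[ℝ] G) : ‖φ‖ ≤ ∑ j, ‖φ (Pi.single j 1)‖ := by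
  refine φ.opNorm_le_bound (Finset.sum_nonneg fun _ _ => norm_nonneg _) fun v => ?_
  have hv : φ v = ∑ j, v j • φ (Pi.single j 1) := by
    conv_lhs => rw [pi_eq_sum_univ' v]
    simp [map_sum]
  rw [hv, Finset.sum_mul]
  refine norm_sum_le_of_le _ fun j _ => ?_
  rw [norm_smul, mul_comm]
  exact mul_le_mul_of_nonneg_left (norm_le_pi_norm v j) (norm_nonneg _)

/-- Landau-type inequality on a box at a point `x` with step `t`. -/
lemma IsBox.norm_iteratedFDerivWithin_succ_le (hΩ : IsBox Ω) {f : (Fin d → ℝ) → ℂ}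
    (hf : ContDiffOn ℝ (⊤ : ℕ∞) f Ω) (i : ℕ) {x : Fin d → ℝ} (hx : x ∈ Ω) {t : ℝ} (ht : 0 < t)
    (hstep : ∀ j : Fin d, x + Pi.single j t ∈ Ω ∨ x + Pi.single j (-t) ∈ Ω) {A B : ℝ}
    (hA : ∀ z ∈ Ω, ‖z - x‖ ≤ t → ‖iteratedFDerivWithin ℝ i f Ω z‖ ≤ A)
    (hB : ∀ z ∈ Ω, ‖z - x‖ ≤ t → ‖iteratedFDerivWithin ℝ (i + 2) f Ω z‖ ≤ B) :
    ‖iteratedFDerivWithin ℝ (i + 1) f Ω x‖ ≤ d * (2 * A / t + B * t) := by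
  rw [← norm_fderivWithin_iteratedFDerivWithin]
  set φ := fderivWithin ℝ (iteratedFDerivWithin ℝ i f Ω) Ω x with hφ
  have hdir : ∀ (j : Fin d) (s : ℝ), |s| = t → x + Pi.single j s ∈ Ω →
      ‖φ (Pi.single j 1)‖ ≤ 2 * A / t + B * t := by
    intro j s hs hy
    have hseg := hΩ.convex.segment_subset hx hy
    have hnorm : ‖(Pi.single j s : Fin d → ℝ)‖ = t := by
      rw [Pi.norm_single, Real.norm_eq_abs, hs]
    have hnear : ∀ z ∈ segment ℝ x (x + Pi.single j s), ‖z - x‖ ≤ t := by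
      intro z hz
      obtain ⟨θ, hθ, rfl⟩ := (segment_eq_image' ℝ _ _).subset hz
      rw [add_sub_cancel_left, add_sub_cancel_left, norm_smul, Real.norm_of_nonneg hθ.1, hnorm]
      exact mul_le_of_le_one_left ht.le hθ.2
    have hmain := norm_fderivWithin_iteratedFDerivWithin_apply_sub_le hΩ.isOpen.uniqueDiffOn hf i
      hseg (fun z hz => hA z (hseg hz) (hnear z hz)) (fun z hz => hB z (hseg hz) (hnear z hz))
    have hsmul : (Pi.single j s : Fin d → ℝ) = s • Pi.single j 1 := by
      rw [← Pi.single_smul, smul_eq_mul, mul_one]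
    rw [add_sub_cancel_left, hnorm, ← hφ, hsmul, map_smul, norm_smul, Real.norm_eq_abs, hs] at hmain
    have hquot : 2 * A / t + B * t = (2 * A + B * t ^ 2) / t := by field_simp
    rw [hquot, le_div_iff₀ ht, mul_comm]
    exact hmain
  calc ‖φ‖ ≤ ∑ j, ‖φ (Pi.single j 1)‖ := φ.norm_le_sum_norm_apply_single
    _ ≤ ∑ _j : Fin d, (2 * A / t + B * t) := Finset.sum_le_sum fun j _ => by
        rcases hstep j with h | h
        · exact hdir j t (abs_of_pos ht) h
        · exact hdir j (-t) (by rw [abs_neg, abs_of_pos ht]) h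
    _ = d * (2 * A / t + B * t) := by simp [mul_add]

lemma muOn_natCast_le_ofReal_iff {q l : ℕ} {f : (Fin d → ℝ) → ℂ} {c : ℝ} (hc : 0 ≤ c) :
    muOn Ω (q : ℤ) l f ≤ ENNReal.ofReal c ↔
      ∀ x ∈ Ω, ∀ i ≤ l, (1 + ‖x‖) ^ q * ‖iteratedFDerivWithin ℝ i f Ω x‖ ≤ c := by
  simp only [muOn, iSup_le_iff, ENNReal.ofReal_le_ofReal_iff hc, zpow_natCast, Subtype.forall]

/-- Weighted Landau inequality: the loss `2 ^ q` comes from comparing weights at distance `≤ 1`. -/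
lemma IsBox.weighted_norm_iteratedFDerivWithin_succ_le (hΩ : IsBox Ω) {f : (Fin d → ℝ) → ℂ}
    (hf : ContDiffOn ℝ (⊤ : ℕ∞) f Ω) (q i : ℕ) {x : Fin d → ℝ} (hx : x ∈ Ω) {t : ℝ} (ht : 0 < t)
    (ht1 : t ≤ 1) (hstep : ∀ j : Fin d, x + Pi.single j t ∈ Ω ∨ x + Pi.single j (-t) ∈ Ω)
    {a b : ℝ} (ha : ∀ z ∈ Ω, (1 + ‖z‖) ^ q * ‖iteratedFDerivWithin ℝ i f Ω z‖ ≤ a)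
    (hb : ∀ z ∈ Ω, (1 + ‖z‖) ^ q * ‖iteratedFDerivWithin ℝ (i + 2) f Ω z‖ ≤ b) :
    (1 + ‖x‖) ^ q * ‖iteratedFDerivWithin ℝ (i + 1) f Ω x‖ ≤
      d * 2 ^ q * (2 * a / t + b * t) := by
  have hw : 0 < (1 + ‖x‖) ^ q := by positivity
  have hlocal : ∀ (k : ℕ) (c : ℝ),
      (∀ z ∈ Ω, (1 + ‖z‖) ^ q * ‖iteratedFDerivWithin ℝ k f Ω z‖ ≤ c) →
      ∀ z ∈ Ω, ‖z - x‖ ≤ t → ‖iteratedFDerivWithin ℝ k f Ω z‖ ≤ 2 ^ q * c / (1 + ‖x‖) ^ q := by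
    intro k c hc z hz hzx
    have hxz : 1 + ‖x‖ ≤ 2 * (1 + ‖z‖) := by
      have := norm_le_norm_add_norm_sub z x
      linarith [norm_nonneg z]
    have hpow : (1 + ‖x‖) ^ q ≤ 2 ^ q * (1 + ‖z‖) ^ q := by
      rw [← mul_pow]
      exact pow_le_pow_left₀ (by positivity) hxz q
    rw [le_div_iff₀ hw, mul_comm]
    calc (1 + ‖x‖) ^ q * ‖iteratedFDerivWithin ℝ k f Ω z‖
        ≤ 2 ^ q * (1 + ‖z‖) ^ q * ‖iteratedFDerivWithin ℝ k f Ω z‖ := by gcongr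
      _ = 2 ^ q * ((1 + ‖z‖) ^ q * ‖iteratedFDerivWithin ℝ k f Ω z‖) := mul_assoc _ _ _
      _ ≤ 2 ^ q * c := by gcongr; exact hc z hz
  have hmain := hΩ.norm_iteratedFDerivWithin_succ_le hf i hx ht hstep (hlocal i a ha)
    (hlocal (i + 2) b hb)
  calc _ ≤ _ := mul_le_mul_of_nonneg_left hmain hw.le
    _ = d * 2 ^ q * (2 * a / t + b * t) := by field_simp

end Box

/-- `N_S(Ω) = N_{S,*}(Ω) ∩ E_S(Ω)` for a box `Ω`. -/
theorem stmt0 (d : ℕ) (hd : 1 ≤ d) (Ω : Set (Fin d → ℝ)) (hΩ : IsBox Ω)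
    (f : ℝ → (Fin d → ℝ) → ℂ)
    (hsmooth : ∀ ε ∈ Set.Ioc (0:ℝ) 1, ContDiffOn ℝ (⊤ : ℕ∞) (f ε) Ω)
    (hfin : ∀ ε ∈ Set.Ioc (0:ℝ) 1, ∀ q l : ℕ, muOn Ω (q:ℤ) l (f ε) < ⊤)
    (hmod : ∀ q l : ℕ, ∃ N : ℕ,
      IsOEps (fun ε => muOn Ω (q:ℤ) l (f ε)) (fun ε => ε ^ (-(N:ℤ))))
    (hneg0 : ∀ q p : ℕ, IsOEps (fun ε => muOn Ω (q:ℤ) 0 (f ε)) (fun ε => ε ^ p)) :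
    ∀ q l p : ℕ, IsOEps (fun ε => muOn Ω (q:ℤ) l (f ε)) (fun ε => ε ^ p) := by
  obtain ⟨δ, hδ, hstep⟩ := hΩ.exists_uniform_step
  intro q l
  induction l with
  | zero => exact hneg0 q
  | succ l ih =>
    intro p
    obtain ⟨N, C₁, hC₁, η₁, hη₁, hmod⟩ := hmod q (l + 2)
    obtain ⟨C₂, hC₂, η₂, hη₂, hneg⟩ := ih (p + (N + p + 1))
    refine ⟨C₂ + d * 2 ^ q * (2 * C₂ + C₁), by positivity, min (min η₁ η₂) (min δ 1),
      by positivity, fun ε hε hεη => ?_⟩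
    simp only [le_min_iff] at hεη
    obtain ⟨⟨hεη₁, hεη₂⟩, hεδ, hε1⟩ := hεη
    have hb := (muOn_natCast_le_ofReal_iff (by positivity)).1 (hmod ε hε hεη₁)
    have ha := (muOn_natCast_le_ofReal_iff (by positivity)).1 (hneg ε hε hεη₂)
    refine (muOn_natCast_le_ofReal_iff (by positivity)).2 fun x hx i hi => ?_
    have hεp : 0 < ε ^ p := pow_pos hε p
    rcases hi.lt_or_eq with hi | rfl
    · calc _ ≤ C₂ * ε ^ (p + (N + p + 1)) := ha x hx i (Nat.lt_succ_iff.1 hi)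
        _ ≤ C₂ * ε ^ p :=
          mul_le_mul_of_nonneg_left (pow_le_pow_of_le_one hε.le hε1 (Nat.le_add_right _ _)) hC₂.le
        _ ≤ _ := mul_le_mul_of_nonneg_right (le_add_of_nonneg_right (by positivity)) hεp.le
    · have ht : 0 < ε ^ (N + p + 1) := pow_pos hε _
      have htε : ε ^ (N + p + 1) ≤ ε := pow_le_of_le_one hε.le hε1 (Nat.succ_ne_zero _)
      have hland := hΩ.weighted_norm_iteratedFDerivWithin_succ_le (hsmooth ε ⟨hε, hε1⟩) q l hx ht
        (htε.trans hε1) (hstep x hx _ ht.le (htε.trans hεδ)) (fun z hz => ha z hz l le_rfl)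
        (fun z hz => hb z hz (l + 2) le_rfl)
      have hlow : 2 * (C₂ * ε ^ (p + (N + p + 1))) / ε ^ (N + p + 1) = 2 * C₂ * ε ^ p := by
        rw [pow_add ε p]
        field_simp
      have hhigh : C₁ * ε ^ (-(N : ℤ)) * ε ^ (N + p + 1) ≤ C₁ * ε ^ p := by
        calc C₁ * ε ^ (-(N : ℤ)) * ε ^ (N + p + 1) = C₁ * ε ^ p * ε := by
              rw [zpow_neg, zpow_natCast, pow_add, pow_add, pow_one]
              field_simp
          _ ≤ C₁ * ε ^ p := mul_le_of_le_one_right (by positivity) hε1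
      rw [hlow] at hland
      calc _ ≤ _ := hland
        _ ≤ d * 2 ^ q * (2 * C₂ * ε ^ p + C₁ * ε ^ p) := by gcongr
        _ = d * 2 ^ q * (2 * C₂ + C₁) * ε ^ p := by ring
        _ ≤ _ := mul_le_mul_of_nonneg_right (le_add_of_nonneg_left hC₂.le) hεp.le
end

section
/- Let d ≥ 1 and let Ω ⊆ ℝ^d be a box, i.e. a product of d open intervals (bounded or not). Let (f_ε)_{ε∈(0,1]} be a net of smooth functions f_ε : Ω → ℂ, each of temperate growth on Ω, such that for every l ∈ ℕ there exist q ∈ ℕ and N ∈ ℕ with μ_{-q,l}(f_ε) = O(ε^{-N}) as ε → 0 (i.e. (f_ε) ∈ E_τ(Ω)). If there exists q ∈ ℕ such that for every p ∈ ℕ one has μ_{-q,0}(f_ε) = O(ε^p) as ε → 0, then for every l ∈ ℕ there exists q' ∈ ℕ such that for every p ∈ ℕ one has μ_{-q',l}(f_ε) = O(ε^p) as ε → 0. In other words, N_τ(Ω) = N_{τ,*}(Ω) ∩ E_τ(Ω). -/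
open MeasureTheory Filter

lemma muOn_neg_le_ofReal_iff {d : ℕ} {Ω : Set (Fin d → ℝ)} {q l : ℕ} {f : (Fin d → ℝ) → ℂ}
    {c : ℝ} (hc : 0 ≤ c) :
    muOn Ω (-(q : ℤ)) l f ≤ ENNReal.ofReal c ↔
      ∀ x ∈ Ω, ∀ i ≤ l, ‖iteratedFDerivWithin ℝ i f Ω x‖ ≤ c * (1 + ‖x‖) ^ q := by
  have key : ∀ (x : Fin d → ℝ) (a : ℝ),
      (1 + ‖x‖) ^ (-(q : ℤ)) * a ≤ c ↔ a ≤ c * (1 + ‖x‖) ^ q := fun x a ↦ by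
    have hx : 0 < (1 + ‖x‖) ^ q := by positivity
    rw [zpow_neg, zpow_natCast, inv_mul_le_iff₀ hx, mul_comm]
  simp only [muOn, iSup_le_iff, ENNReal.ofReal_le_ofReal_iff hc, key, Subtype.forall]

section Landau

variable {E F : Type*} [NormedAddCommGroup E] [NormedSpace ℝ E]
  [NormedAddCommGroup F] [NormedSpace ℝ F]

/-- A first-order Taylor estimate for the `i`-th derivative on a convex subset of an open set. -/
lemma norm_iteratedFDerivWithin_taylor_le {Ω S : Set E} (hΩ : IsOpen Ω) (hS : Convex ℝ S)
    (hSΩ : S ⊆ Ω) {f : E → F} (hf : ContDiffOn ℝ (⊤ : ℕ∞) f Ω) {i : ℕ} {M δ : ℝ} (hM : 0 ≤ M)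
    (h2 : ∀ z ∈ S, ‖iteratedFDerivWithin ℝ (i + 2) f Ω z‖ ≤ M) {x y : E}
    (hx : x ∈ S) (hy : y ∈ S) (hδ : ∀ z ∈ S, ‖z - x‖ ≤ δ) :
    ‖iteratedFDerivWithin ℝ i f Ω y - iteratedFDerivWithin ℝ i f Ω x -
      fderivWithin ℝ (iteratedFDerivWithin ℝ i f Ω) Ω x (y - x)‖ ≤ M * δ * ‖y - x‖ := by
  have hdiff : ∀ j : ℕ, ∀ z ∈ S, DifferentiableAt ℝ (iteratedFDerivWithin ℝ j f Ω) z :=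
    fun j z hz ↦ (hf.differentiableOn_iteratedFDerivWithin (by exact_mod_cast ENat.natCast_lt_top j)
      hΩ.uniqueDiffOn).differentiableAt (hΩ.mem_nhds (hSΩ hz))
  have hfd : ∀ j : ℕ, ∀ z ∈ S, fderiv ℝ (iteratedFDerivWithin ℝ j f Ω) z =
      fderivWithin ℝ (iteratedFDerivWithin ℝ j f Ω) Ω z :=
    fun j z hz ↦ (fderivWithin_of_isOpen hΩ (hSΩ hz)).symm
  refine hS.norm_image_sub_le_of_norm_hasFDerivWithin_le'
    (fun z hz ↦ (hdiff i z hz).hasFDerivAt.hasFDerivWithinAt) (fun z hz ↦ ?_) hx hy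
  have h1 : ‖iteratedFDerivWithin ℝ (i + 1) f Ω z - iteratedFDerivWithin ℝ (i + 1) f Ω x‖ ≤
      M * ‖z - x‖ :=
    hS.norm_image_sub_le_of_norm_fderiv_le (hdiff (i + 1)) (fun w hw ↦ by
      rw [hfd _ w hw, norm_fderivWithin_iteratedFDerivWithin]
      exact h2 w hw) hx hz
  rw [iteratedFDerivWithin_succ_eq_comp_left, Function.comp_apply, Function.comp_apply,
    ← dist_eq_norm, LinearIsometryEquiv.dist_map, dist_eq_norm] at h1
  rw [hfd i z hz]
  exact h1.trans (by gcongr; exact hδ z hz)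

lemma ContinuousLinearMap.opNorm_le_of_closedBall_sub {L : E →L[ℝ] F} {x x₀ : E} {r c : ℝ}
    (hr : 0 < r) (hc : 0 ≤ c) (h : ∀ y ∈ Metric.closedBall x₀ r, ‖L (y - x)‖ ≤ c) :
    ‖L‖ ≤ 2 * c / r := by
  refine L.opNorm_le_bound (by positivity) fun v ↦ ?_
  rcases eq_or_ne v 0 with rfl | hv
  · simp
  have hv' : 0 < ‖v‖ := norm_pos_iff.mpr hv
  have h₁ := h (x₀ + (r / ‖v‖) • v) (by
    simp [norm_smul, abs_of_pos hr, hv'.ne'])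
  have h₀ := h x₀ (Metric.mem_closedBall_self hr.le)
  have h₂ : ‖L ((r / ‖v‖) • v)‖ ≤ 2 * c := by
    have : (r / ‖v‖) • v = (x₀ + (r / ‖v‖) • v - x) - (x₀ - x) := by abel
    rw [this, map_sub]
    linarith [norm_sub_le (L (x₀ + (r / ‖v‖) • v - x)) (L (x₀ - x))]
  rw [map_smul, norm_smul, Real.norm_of_nonneg (by positivity), div_mul_eq_mul_div,
    div_le_iff₀ hv'] at h₂
  rw [div_mul_eq_mul_div, le_div_iff₀ hr]
  linarith

/-- A weighted Landau inequality on a convex open set: the derivative of order `i + 1` is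
controlled by those of order `i` and `i + 2`, with a constant depending only on the set and the
weight. -/
lemma exists_norm_iteratedFDerivWithin_succ_le {Ω : Set E} (hΩ : IsOpen Ω) (hconv : Convex ℝ Ω)
    (hne : Ω.Nonempty) (q : ℕ) :
    ∃ C > (0 : ℝ), ∀ (f : E → F), ContDiffOn ℝ (⊤ : ℕ∞) f Ω → ∀ (i : ℕ) (A B t : ℝ),
      0 ≤ A → 0 ≤ B → 0 < t → t ≤ 1 →
      (∀ z ∈ Ω, ‖iteratedFDerivWithin ℝ i f Ω z‖ ≤ A * (1 + ‖z‖) ^ q) →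
      (∀ z ∈ Ω, ‖iteratedFDerivWithin ℝ (i + 2) f Ω z‖ ≤ B * (1 + ‖z‖) ^ q) →
      ∀ x ∈ Ω, ‖iteratedFDerivWithin ℝ (i + 1) f Ω x‖ ≤
        C * (A / t + B * t) * (1 + ‖x‖) ^ (q + 2) := by
  obtain ⟨x₀, hx₀⟩ := hne
  obtain ⟨r, hr, hball⟩ := Metric.nhds_basis_closedBall.mem_iff.mp (hΩ.mem_nhds hx₀)
  set K : ℝ := 2 + ‖x₀‖ + r
  have hK1 : 1 ≤ K := by linarith [norm_nonneg x₀]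
  refine ⟨4 * K ^ (q + 2) / r, by positivity, fun f hf i A B t hA hB ht ht1 h0 h2 x hx ↦ ?_⟩
  set ρ : ℝ := K * (1 + ‖x‖) with hρ
  have hρ1 : 1 ≤ ρ := one_le_mul_of_one_le_of_one_le hK1 (by linarith [norm_nonneg x])
  set L := fderivWithin ℝ (iteratedFDerivWithin ℝ i f Ω) Ω x
  have hdir : ∀ y ∈ Metric.closedBall x₀ r, ‖L (y - x)‖ ≤ 2 * (A / t + B * t) * ρ ^ (q + 2) := by
    intro y hy
    have hyx : 1 + ‖x‖ + ‖y - x‖ ≤ ρ := by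
      have h₁ : ‖y‖ ≤ ‖x₀‖ + r := norm_le_norm_add_const_of_dist_le hy
      have h₂ := norm_sub_le y x
      nlinarith [norm_nonneg x, norm_nonneg x₀, mul_nonneg (norm_nonneg x) (norm_nonneg x₀),
        mul_nonneg (norm_nonneg x) hr.le]
    have hyx' : ‖y - x‖ ≤ ρ := by linarith [norm_nonneg x]
    set y' : E := x + t • (y - x) with hy'
    have hy'Ω : y' ∈ Ω := hconv.add_smul_sub_mem hx (hball hy) ⟨ht.le, ht1⟩
    have hy'x : y' - x = t • (y - x) := by simp [hy']
    have hnorm : ‖y' - x‖ = t * ‖y - x‖ := by rw [hy'x, norm_smul, Real.norm_of_nonneg ht.le]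
    have hseg : segment ℝ x y' ⊆ Ω := hconv.segment_subset hx hy'Ω
    have hdist : ∀ z ∈ segment ℝ x y', ‖z - x‖ ≤ t * ‖y - x‖ := fun z hz ↦ by
      rw [← hnorm]
      exact norm_sub_le_of_mem_segment hz
    have hzρ : ∀ z ∈ segment ℝ x y', 1 + ‖z‖ ≤ ρ := fun z hz ↦ by
      have h₁ := hdist z hz
      have h₂ : t * ‖y - x‖ ≤ ‖y - x‖ := mul_le_of_le_one_left (norm_nonneg _) ht1
      have h₃ : ‖z‖ ≤ ‖x‖ + ‖z - x‖ := norm_le_norm_add_norm_sub' z x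
      linarith
    have htaylor := norm_iteratedFDerivWithin_taylor_le hΩ (convex_segment x y') hseg hf
      (M := B * ρ ^ q) (by positivity)
      (fun z hz ↦ (h2 z (hseg hz)).trans (by gcongr; exact hzρ z hz))
      (left_mem_segment ℝ x y') (right_mem_segment ℝ x y') hdist
    have hgy : ‖iteratedFDerivWithin ℝ i f Ω y'‖ ≤ A * ρ ^ q :=
      (h0 y' hy'Ω).trans (by gcongr; exact hzρ _ (right_mem_segment ℝ x y'))
    have hgx : ‖iteratedFDerivWithin ℝ i f Ω x‖ ≤ A * ρ ^ q :=
      (h0 x hx).trans (by gcongr; exact hzρ _ (left_mem_segment ℝ x y'))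
    have hLt : t * ‖L (y - x)‖ ≤ 2 * (A * ρ ^ q) + B * ρ ^ q * (t * ρ) * (t * ρ) := by
      have h₁ : t * ‖L (y - x)‖ = ‖L (y' - x)‖ := by
        rw [hy'x, map_smul, norm_smul, Real.norm_of_nonneg ht.le]
      have h₂ : B * ρ ^ q * (t * ‖y - x‖) * ‖y' - x‖ ≤ B * ρ ^ q * (t * ρ) * (t * ρ) := by
        rw [hnorm]
        gcongr
      have h₃ := norm_sub_le (iteratedFDerivWithin ℝ i f Ω y') (iteratedFDerivWithin ℝ i f Ω x)
      have h₄ := norm_le_norm_add_norm_sub (iteratedFDerivWithin ℝ i f Ω y' -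
        iteratedFDerivWithin ℝ i f Ω x) (L (y' - x))
      linarith
    have hρ2 : ρ ^ q ≤ ρ ^ (q + 2) := pow_le_pow_right₀ hρ1 (by lia)
    have hLt' : t * ‖L (y - x)‖ ≤ t * (2 * (A / t + B * t) * ρ ^ (q + 2)) := by
      have h₁ : t * (2 * (A / t + B * t) * ρ ^ (q + 2)) =
          2 * (A * ρ ^ (q + 2)) + 2 * (B * ρ ^ q * (t * ρ) * (t * ρ)) := by
        field_simp
        ring
      have h₂ : A * ρ ^ q ≤ A * ρ ^ (q + 2) := by gcongr
      have h₃ : 0 ≤ B * ρ ^ q * (t * ρ) * (t * ρ) := by positivity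
      linarith
    exact le_of_mul_le_mul_left hLt' ht
  rw [← norm_fderivWithin_iteratedFDerivWithin]
  refine (ContinuousLinearMap.opNorm_le_of_closedBall_sub hr (by positivity) hdir).trans_eq ?_
  rw [hρ, mul_pow]
  ring

end Landau

lemma IsBox.isOpen_s1 {d : ℕ} {Ω : Set (Fin d → ℝ)} (h : IsBox Ω) : IsOpen Ω := by
  obtain ⟨I, hI, rfl⟩ := h
  exact isOpen_set_pi Set.finite_univ fun j _ ↦ (hI j).1

lemma IsBox.convex_s1 {d : ℕ} {Ω : Set (Fin d → ℝ)} (h : IsBox Ω) : Convex ℝ Ω := by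
  obtain ⟨I, hI, rfl⟩ := h
  exact convex_pi fun j _ ↦ (hI j).2

/-- `N_τ(Ω) = N_{τ,*}(Ω) ∩ E_τ(Ω)` for a box `Ω`. -/
theorem stmt1 (d : ℕ) (hd : 1 ≤ d) (Ω : Set (Fin d → ℝ)) (hΩ : IsBox Ω)
    (f : ℝ → (Fin d → ℝ) → ℂ)
    (hsmooth : ∀ ε ∈ Set.Ioc (0:ℝ) 1, ContDiffOn ℝ (⊤ : ℕ∞) (f ε) Ω)
    (htemp : ∀ ε ∈ Set.Ioc (0:ℝ) 1, ∀ l : ℕ, ∃ q : ℕ, muOn Ω (-(q:ℤ)) l (f ε) < ⊤)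
    (hmod : ∀ l : ℕ, ∃ q N : ℕ,
      IsOEps (fun ε => muOn Ω (-(q:ℤ)) l (f ε)) (fun ε => ε ^ (-(N:ℤ))))
    (hneg0 : ∃ q : ℕ, ∀ p : ℕ,
      IsOEps (fun ε => muOn Ω (-(q:ℤ)) 0 (f ε)) (fun ε => ε ^ p)) :
    ∀ l : ℕ, ∃ q' : ℕ, ∀ p : ℕ,
      IsOEps (fun ε => muOn Ω (-(q':ℤ)) l (f ε)) (fun ε => ε ^ p) := by
  rcases Ω.eq_empty_or_nonempty with rfl | hne
  · exact fun l ↦ ⟨0, fun p ↦ ⟨1, one_pos, 1, one_pos, fun ε _ _ ↦ by simp [muOn]⟩⟩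
  intro l
  induction l with
  | zero => exact hneg0
  | succ l ih =>
    obtain ⟨q₀, hq₀⟩ := ih
    obtain ⟨q₂, N, B, hB, η₂, hη₂, h2⟩ := hmod (l + 2)
    obtain ⟨C, hC, hLandau⟩ :=
      exists_norm_iteratedFDerivWithin_succ_le (F := ℂ) hΩ.isOpen_s1 hΩ.convex_s1 hne (q₀ + q₂)
    refine ⟨q₀ + q₂ + 2, fun p ↦ ?_⟩
    obtain ⟨A, hA, η₀, hη₀, h0⟩ := hq₀ (N + p + p)
    refine ⟨A + C * (A + B), by positivity, min 1 (min η₀ η₂), by positivity,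
      fun ε hε hεη ↦ ?_⟩
    obtain ⟨hε1, hεη₀, hεη₂⟩ : ε ≤ 1 ∧ ε ≤ η₀ ∧ ε ≤ η₂ := by simpa using hεη
    have h0' := (muOn_neg_le_ofReal_iff (by positivity)).mp (h0 ε hε hεη₀)
    have h2' := (muOn_neg_le_ofReal_iff (by positivity)).mp (h2 ε hε hεη₂)
    refine (muOn_neg_le_ofReal_iff (by positivity)).mpr fun x hx i hi ↦ ?_
    have hweight : ∀ (z : Fin d → ℝ) {m n : ℕ}, m ≤ n → (1 + ‖z‖) ^ m ≤ (1 + ‖z‖) ^ n :=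
      fun z m n hmn ↦ pow_le_pow_right₀ (by linarith [norm_nonneg z]) hmn
    rcases Nat.le_succ_iff.mp hi with hil | rfl
    · refine (h0' x hx i hil).trans ?_
      have hpow : ε ^ (N + p + p) ≤ ε ^ p := pow_le_pow_of_le_one hε.le hε1 (by lia)
      have hAC : A ≤ A + C * (A + B) := by linarith [mul_pos hC (add_pos hA hB)]
      gcongr ?_ * ?_ * ?_
      exact hweight x (by lia)
    · have key := hLandau (f ε) (hsmooth ε ⟨hε, hε1⟩) l (A * ε ^ (N + p + p))
        (B * ε ^ (-(N : ℤ))) (ε ^ (N + p)) (by positivity) (by positivity) (by positivity)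
        (pow_le_one₀ hε.le hε1)
        (fun z hz ↦ (h0' z hz l le_rfl).trans (by gcongr ?_ * ?_; exact hweight z (by lia)))
        (fun z hz ↦ (h2' z hz (l + 2) le_rfl).trans (by gcongr ?_ * ?_; exact hweight z (by lia)))
        x hx
      refine key.trans ?_
      have hscale : A * ε ^ (N + p + p) / ε ^ (N + p) + B * ε ^ (-(N : ℤ)) * ε ^ (N + p) =
          (A + B) * ε ^ p := by
        rw [zpow_neg, zpow_natCast, pow_add _ (N + p) p, pow_add _ N p]
        field_simp
      rw [hscale, ← mul_assoc]
      gcongr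
      linarith
end

section
/- Let u be a tempered distribution on ℝ^d and let ρ be a mollifier on ℝ^d. For ε ∈ (0,1] define u_ε : ℝ^d → ℂ by u_ε(x) = u(y ↦ ρ_ε(x−y)). Then each u_ε is smooth with temperate growth, the net (u_ε)_{ε∈(0,1]} belongs to E_τ(ℝ^d), and moreover the induced embedding is injective: if (u_ε)_{ε∈(0,1]} belongs to N_τ(ℝ^d), then u = 0. -/
open MeasureTheory Filter

open scoped SchwartzMap LineDeriv BoundedContinuousFunction ContDiff

section WeightedCalculus

variable {E : Type*} [NormedAddCommGroup E] [NormedSpace ℝ E]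
  {F : Type*} [NormedAddCommGroup F] [NormedSpace ℝ F]

lemma one_add_norm_pow_le_mul {E : Type*} [NormedAddCommGroup E] {y w z : E} (k : ℕ)
    (h : ‖y - w‖ ≤ ‖z‖) :
    (1 + ‖y‖) ^ k ≤ (1 + ‖z‖) ^ k * (1 + ‖w‖) ^ k := by
  rw [← mul_pow]
  have h₁ : ‖y‖ ≤ ‖w‖ + ‖y - w‖ := norm_le_norm_add_norm_sub' y w
  gcongr
  nlinarith [norm_nonneg z, norm_nonneg w, mul_nonneg (norm_nonneg z) (norm_nonneg w)]

/-- Mean value inequality with polynomial weights. -/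
lemma weight_mul_norm_sub_le {G : E → F} {k : ℕ} {A : ℝ} (hG : Differentiable ℝ G)
    (hA : ∀ w, (1 + ‖w‖) ^ k * ‖fderiv ℝ G w‖ ≤ A) (y w : E) :
    (1 + ‖y‖) ^ k * ‖G w - G y‖ ≤ A * (1 + ‖w - y‖) ^ k * ‖w - y‖ := by
  have key : ‖G w - G y‖ ≤ (A * (1 + ‖w - y‖) ^ k / (1 + ‖y‖) ^ k) * ‖w - y‖ := by
    refine Convex.norm_image_sub_le_of_norm_fderiv_le (𝕜 := ℝ) (s := Metric.closedBall y ‖w - y‖)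
      (fun x _ => hG x) (fun x hx => ?_) (convex_closedBall _ _) (by simp)
      (by simp [dist_eq_norm])
    rw [le_div_iff₀ (by positivity)]
    have hx' : ‖y - x‖ ≤ ‖w - y‖ := by
      rw [norm_sub_rev, ← dist_eq_norm]; exact hx
    calc ‖fderiv ℝ G x‖ * (1 + ‖y‖) ^ k
        ≤ ‖fderiv ℝ G x‖ * ((1 + ‖w - y‖) ^ k * (1 + ‖x‖) ^ k) := by
          gcongr; exact one_add_norm_pow_le_mul k hx'
      _ = ((1 + ‖x‖) ^ k * ‖fderiv ℝ G x‖) * (1 + ‖w - y‖) ^ k := by ring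
      _ ≤ A * (1 + ‖w - y‖) ^ k := by gcongr; exact hA x
  calc (1 + ‖y‖) ^ k * ‖G w - G y‖
      ≤ (1 + ‖y‖) ^ k * ((A * (1 + ‖w - y‖) ^ k / (1 + ‖y‖) ^ k) * ‖w - y‖) := by gcongr
    _ = A * (1 + ‖w - y‖) ^ k * ‖w - y‖ := by field_simp

/-- First order Taylor estimate with polynomial weights. -/
lemma weight_mul_norm_sub_sub_fderiv_le {G : E → F} {k : ℕ} {A : ℝ} (hA0 : 0 ≤ A)
    (hG : Differentiable ℝ G)
    (hA : ∀ y w, (1 + ‖y‖) ^ k * ‖fderiv ℝ G w - fderiv ℝ G y‖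
      ≤ A * (1 + ‖w - y‖) ^ k * ‖w - y‖) (y w : E) :
    (1 + ‖y‖) ^ k * ‖G w - G y - fderiv ℝ G y (w - y)‖
      ≤ A * (1 + ‖w - y‖) ^ k * ‖w - y‖ ^ 2 := by
  have key : ‖G w - G y - fderiv ℝ G y (w - y)‖
      ≤ (A * (1 + ‖w - y‖) ^ k * ‖w - y‖ / (1 + ‖y‖) ^ k) * ‖w - y‖ := by
    refine Convex.norm_image_sub_le_of_norm_fderiv_le' (𝕜 := ℝ) (s := Metric.closedBall y ‖w - y‖)
      (fun x _ => hG x) (fun x hx => ?_) (convex_closedBall _ _) (by simp)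
      (by simp [dist_eq_norm])
    rw [le_div_iff₀ (by positivity)]
    have hx' : ‖x - y‖ ≤ ‖w - y‖ := by rw [← dist_eq_norm]; exact hx
    rw [mul_comm]
    refine (hA y x).trans ?_
    gcongr
  calc (1 + ‖y‖) ^ k * ‖G w - G y - fderiv ℝ G y (w - y)‖
      ≤ (1 + ‖y‖) ^ k * ((A * (1 + ‖w - y‖) ^ k * ‖w - y‖ / (1 + ‖y‖) ^ k) * ‖w - y‖) := by gcongr
    _ = A * (1 + ‖w - y‖) ^ k * ‖w - y‖ ^ 2 := by field_simp

/-- Directional derivatives commute with iterated derivatives. -/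
lemma iteratedFDeriv_fderiv_apply_const {f : E → F} (hf : ContDiff ℝ ∞ f) (v : E) (i : ℕ) :
    iteratedFDeriv ℝ i (fun y => fderiv ℝ f y v)
      = fun y => fderiv ℝ (iteratedFDeriv ℝ i f) y v := by
  induction i with
  | zero =>
    ext y m
    have h : fderiv ℝ (iteratedFDeriv ℝ 0 f) y v
        = (continuousMultilinearCurryFin0 ℝ E F).symm (fderiv ℝ f y v) :=
      congrArg (· v) ((continuousMultilinearCurryFin0 ℝ E F).symm.comp_fderiv (f := f) (x := y))
    rw [iteratedFDeriv_zero_apply, h]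
    rfl
  | succ i ih =>
    have hsm : ContDiff ℝ ∞ (iteratedFDeriv ℝ i f) :=
      hf.iteratedFDeriv_right (m := ∞) (i := i) (mod_cast le_top)
    have hsm' : Differentiable ℝ (fderiv ℝ (iteratedFDeriv ℝ i f)) :=
      (hsm.fderiv_right (m := ∞) (by simp)).differentiable (by simp)
    funext y
    have h : fderiv ℝ (iteratedFDeriv ℝ (i + 1) f) y v
        = (continuousMultilinearCurryLeftEquiv ℝ (fun _ : Fin (i + 1) => E) F).symm
          (fderiv ℝ (fderiv ℝ (iteratedFDeriv ℝ i f)) y v) := by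
      let e : (E →L[ℝ] E [×i]→L[ℝ] F) →L[ℝ] (E [×(i + 1)]→L[ℝ] F) :=
        (continuousMultilinearCurryLeftEquiv ℝ
          (fun _ : Fin (i + 1) => E) F).symm.toContinuousLinearEquiv
      have hc := HasFDerivAt.comp (𝕜 := ℝ) (E := E) (F := E →L[ℝ] E [×i]→L[ℝ] F)
        (G := E [×(i + 1)]→L[ℝ] F) (g := e) (g' := e)
        (f := fderiv ℝ (iteratedFDeriv ℝ i f)) y e.hasFDerivAt (hsm' y).hasFDerivAt
      exact DFunLike.congr_fun hc.fderiv v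
    rw [h, iteratedFDeriv_succ_eq_comp_left, ih, Function.comp_apply]
    congr 1
    ext1 w
    rw [fderiv_clm_apply (hsm' y) (differentiableAt_const v)]
    have hsymm : IsSymmSndFDerivAt ℝ (iteratedFDeriv ℝ i f) y :=
      hsm.contDiffAt.isSymmSndFDerivAt (by
        simpa using (mod_cast le_top : ((2 : ℕ∞) : WithTop ℕ∞) ≤ ∞))
    simpa using hsymm w v

end WeightedCalculus

section Jet

variable {E : Type*} [NormedAddCommGroup E] [NormedSpace ℝ E]

/-- The Banach space of families of bounded continuous functions in which jets of order `n`
of Schwartz functions live. -/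
def JetSpace (E : Type*) [NormedAddCommGroup E] [NormedSpace ℝ E] (n : ℕ) : Type _ :=
  (i : Fin (n + 1)) → E →ᵇ (E [×i]→L[ℝ] ℂ)

noncomputable instance (n : ℕ) : NormedAddCommGroup (JetSpace E n) :=
  inferInstanceAs (NormedAddCommGroup ((i : Fin (n + 1)) → E →ᵇ (E [×i]→L[ℝ] ℂ)))

noncomputable instance (n : ℕ) : NormedSpace ℂ (JetSpace E n) :=
  inferInstanceAs (NormedSpace ℂ ((i : Fin (n + 1)) → E →ᵇ (E [×i]→L[ℝ] ℂ)))

instance (n : ℕ) : CompleteSpace (JetSpace E n) :=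
  inferInstanceAs (CompleteSpace ((i : Fin (n + 1)) → E →ᵇ (E [×i]→L[ℝ] ℂ)))

/-- Evaluation of the component of order `i` of a jet at a point. -/
noncomputable def JetSpace.evalCLM {n : ℕ} (i : Fin (n + 1)) (y : E) :
    JetSpace E n →L[ℂ] (E [×i]→L[ℝ] ℂ) :=
  (BoundedContinuousFunction.evalCLM ℂ y).comp
    (ContinuousLinearMap.proj (R := ℂ) (φ := fun i : Fin (n + 1) => E →ᵇ (E [×i]→L[ℝ] ℂ)) i)

lemma JetSpace.ext_evalCLM {n : ℕ} {a b : JetSpace E n}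
    (h : ∀ (i : Fin (n + 1)) (y : E), evalCLM i y a = evalCLM i y b) : a = b :=
  funext fun i => BoundedContinuousFunction.ext (h i)

lemma exists_weight_mul_iteratedFDeriv_le (k i : ℕ) (f : 𝓢(E, ℂ)) :
    ∃ C, ∀ y, (1 + ‖y‖) ^ k * ‖iteratedFDeriv ℝ i f y‖ ≤ C :=
  ⟨_, fun y => SchwartzMap.one_add_le_sup_seminorm_apply (𝕜 := ℝ) (m := (k, i)) le_rfl le_rfl f y⟩

/-- The jet of order `n` of a Schwartz function, with weight `(1 + ‖y‖) ^ k`, as a function. -/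
noncomputable def jetFun (k n : ℕ) (f : 𝓢(E, ℂ)) : JetSpace E n :=
  fun i => BoundedContinuousFunction.ofNormedAddCommGroup
    (fun y => ((1 + ‖y‖) ^ k : ℝ) • iteratedFDeriv ℝ i f y)
    (by
      have := (f.smooth ⊤).continuous_iteratedFDeriv (m := i) (mod_cast le_top)
      fun_prop)
    (exists_weight_mul_iteratedFDeriv_le k i f).choose
    (fun y => by
      rw [norm_smul, Real.norm_of_nonneg (by positivity)]
      exact (exists_weight_mul_iteratedFDeriv_le k i f).choose_spec y)

lemma evalCLM_jetFun (k n : ℕ) (f : 𝓢(E, ℂ)) (i : Fin (n + 1)) (y : E) :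
    JetSpace.evalCLM i y (jetFun k n f) = ((1 + ‖y‖) ^ k : ℝ) • iteratedFDeriv ℝ i f y := rfl

/-- The jet of order `n` of a Schwartz function, with weight `(1 + ‖y‖) ^ k`. -/
noncomputable def jet (k n : ℕ) : 𝓢(E, ℂ) →ₗ[ℂ] JetSpace E n where
  toFun := jetFun k n
  map_add' f g := by
    refine JetSpace.ext_evalCLM fun i y => ?_
    rw [map_add, evalCLM_jetFun, evalCLM_jetFun, evalCLM_jetFun, FunLike.coe_add,
      iteratedFDeriv_add_apply (f.contDiffAt i) (g.contDiffAt i), smul_add]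
  map_smul' c f := by
    refine JetSpace.ext_evalCLM fun i y => ?_
    rw [RingHom.id_apply, map_smul, evalCLM_jetFun, evalCLM_jetFun, FunLike.coe_smul,
      iteratedFDeriv_const_smul_apply (f.contDiffAt i), smul_comm]

lemma evalCLM_jet (k n : ℕ) (f : 𝓢(E, ℂ)) (i : Fin (n + 1)) (y : E) :
    JetSpace.evalCLM i y (jet k n f) = ((1 + ‖y‖) ^ k : ℝ) • iteratedFDeriv ℝ i f y := rfl

lemma norm_jet_le {k n : ℕ} {f : 𝓢(E, ℂ)} {M : ℝ} (hM : 0 ≤ M)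
    (h : ∀ i ≤ n, ∀ y, (1 + ‖y‖) ^ k * ‖iteratedFDeriv ℝ i f y‖ ≤ M) : ‖jet k n f‖ ≤ M := by
  refine (pi_norm_le_iff_of_nonneg hM).2 fun i =>
    (BoundedContinuousFunction.norm_le hM).2 fun y => ?_
  change ‖JetSpace.evalCLM i y (jet k n f)‖ ≤ M
  rw [evalCLM_jet, norm_smul, Real.norm_of_nonneg (by positivity)]
  exact h i (by omega) y

lemma le_norm_jet {k n i : ℕ} (hi : i ≤ n) (f : 𝓢(E, ℂ)) (y : E) :
    (1 + ‖y‖) ^ k * ‖iteratedFDeriv ℝ i f y‖ ≤ ‖jet k n f‖ := by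
  have h₁ : ‖JetSpace.evalCLM ⟨i, by omega⟩ y (jet k n f)‖ ≤ ‖jet k n f‖ :=
    ((jet k n f ⟨i, by omega⟩).norm_coe_le_norm y).trans
      (norm_le_pi_norm (G := fun i : Fin (n + 1) => E →ᵇ (E [×i]→L[ℝ] ℂ)) (jet k n f) ⟨i, by omega⟩)
  rwa [evalCLM_jet, norm_smul, Real.norm_of_nonneg (by positivity)] at h₁

lemma iteratedFDeriv_compSubConstCLM (x : E) (f : 𝓢(E, ℂ)) (i : ℕ) (y : E) :
    iteratedFDeriv ℝ i (f.compSubConstCLM ℂ x) y = iteratedFDeriv ℝ i f (y - x) :=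
  congrFun (iteratedFDeriv_comp_sub' i x) y

lemma norm_jet_compSubConstCLM_le (k n : ℕ) (x : E) (f : 𝓢(E, ℂ)) :
    ‖jet k n (f.compSubConstCLM ℂ x)‖ ≤ (1 + ‖x‖) ^ k * ‖jet k n f‖ := by
  refine norm_jet_le (by positivity) fun i hi y => ?_
  rw [iteratedFDeriv_compSubConstCLM]
  calc _ ≤ ((1 + ‖x‖) ^ k * (1 + ‖y - x‖) ^ k) * ‖iteratedFDeriv ℝ i f (y - x)‖ := by
        gcongr; exact one_add_norm_pow_le_mul k (by simp)
    _ ≤ _ := by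
        rw [mul_assoc]; gcongr; exact le_norm_jet hi f _

lemma iteratedFDeriv_lineDerivOp (v : E) (f : 𝓢(E, ℂ)) (i : ℕ) (y : E) :
    iteratedFDeriv ℝ i (∂_{v} f : 𝓢(E, ℂ)) y = fderiv ℝ (iteratedFDeriv ℝ i f) y v :=
  congrFun (iteratedFDeriv_fderiv_apply_const (f.smooth ⊤) v i) y

lemma norm_jet_lineDerivOp_le (k n : ℕ) (v : E) (f : 𝓢(E, ℂ)) :
    ‖jet k n (∂_{v} f : 𝓢(E, ℂ))‖ ≤ ‖v‖ * ‖jet k (n + 1) f‖ := by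
  refine norm_jet_le (by positivity) fun i hi y => ?_
  rw [iteratedFDeriv_lineDerivOp]
  calc _ ≤ (1 + ‖y‖) ^ k * (‖fderiv ℝ (iteratedFDeriv ℝ i f) y‖ * ‖v‖) := by
        gcongr; exact ContinuousLinearMap.le_opNorm _ _
    _ = ‖v‖ * ((1 + ‖y‖) ^ k * ‖iteratedFDeriv ℝ (i + 1) f y‖) := by
        rw [norm_fderiv_iteratedFDeriv]; ring
    _ ≤ _ := by gcongr; exact le_norm_jet (by omega) f _

lemma SchwartzMap.differentiable_iteratedFDeriv (f : 𝓢(E, ℂ)) (i : ℕ) :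
    Differentiable ℝ (iteratedFDeriv ℝ i f) :=
  (f.smooth ⊤).differentiable_iteratedFDeriv (mod_cast WithTop.coe_lt_top _)

lemma weight_mul_norm_iteratedFDeriv_sub_le {k n i : ℕ} (hi : i + 1 ≤ n) (f : 𝓢(E, ℂ)) (y w : E) :
    (1 + ‖y‖) ^ k * ‖iteratedFDeriv ℝ i f w - iteratedFDeriv ℝ i f y‖
      ≤ ‖jet k n f‖ * (1 + ‖w - y‖) ^ k * ‖w - y‖ := by
  refine weight_mul_norm_sub_le (f.differentiable_iteratedFDeriv i) (fun w => ?_) y w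
  rw [norm_fderiv_iteratedFDeriv]
  exact le_norm_jet hi f w

lemma norm_jet_compSubConstCLM_sub_le (k n : ℕ) (z : E) (f : 𝓢(E, ℂ)) :
    ‖jet k n (f.compSubConstCLM ℂ z - f)‖ ≤ ‖jet k (n + 1) f‖ * (1 + ‖z‖) ^ k * ‖z‖ := by
  refine norm_jet_le (by positivity) fun i hi y => ?_
  have h := weight_mul_norm_iteratedFDeriv_sub_le (k := k) (Nat.succ_le_succ hi) f y (y - z)
  rw [FunLike.coe_sub, iteratedFDeriv_sub_apply (SchwartzMap.contDiffAt _ i) (f.contDiffAt i),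
    iteratedFDeriv_compSubConstCLM]
  simpa using h

lemma norm_jet_compSubConstCLM_sub_add_le (k n : ℕ) (z : E) (f : 𝓢(E, ℂ)) :
    ‖jet k n (f.compSubConstCLM ℂ z - f + ∂_{z} f)‖
      ≤ ‖jet k (n + 2) f‖ * (1 + ‖z‖) ^ k * ‖z‖ ^ 2 := by
  refine norm_jet_le (by positivity) fun i hi y => ?_
  have h := weight_mul_norm_sub_sub_fderiv_le (k := k) (norm_nonneg (jet k (n + 2) f))
    (f.differentiable_iteratedFDeriv i) (fun y w => by
      have h' := weight_mul_norm_iteratedFDeriv_sub_le (k := k) (i := i + 1) (n := n + 2)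
        (by omega) f y w
      have hd := (continuousMultilinearCurryLeftEquiv ℝ (fun _ : Fin (i + 1) => E) ℂ).symm.dist_map
        (fderiv ℝ (iteratedFDeriv ℝ i f) w) (fderiv ℝ (iteratedFDeriv ℝ i f) y)
      rw [dist_eq_norm, dist_eq_norm] at hd
      rwa [← hd]) y (y - z)
  rw [FunLike.coe_add, iteratedFDeriv_add_apply (SchwartzMap.contDiffAt _ i)
    (SchwartzMap.contDiffAt _ i), FunLike.coe_sub,
    iteratedFDeriv_sub_apply (SchwartzMap.contDiffAt _ i) (f.contDiffAt i),
    iteratedFDeriv_compSubConstCLM, iteratedFDeriv_lineDerivOp]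
  simpa using h

lemma lineDerivOp_compSubConstCLM (x v : E) (f : 𝓢(E, ℂ)) :
    ∂_{v} (f.compSubConstCLM ℂ x) = (∂_{v} f : 𝓢(E, ℂ)).compSubConstCLM ℂ x := by
  ext y
  simp only [SchwartzMap.lineDerivOp_apply_eq_fderiv, SchwartzMap.compSubConstCLM_apply]
  have := fderiv_comp_sub (𝕜 := ℝ) (f := f) (x := y) x
  exact congrArg (· v) this

variable [FiniteDimensional ℝ E]

lemma hasFDerivAt_jet_compSubConstCLM (k n : ℕ) (f : 𝓢(E, ℂ)) (x : E) :
    ∃ L : E →L[ℝ] JetSpace E n,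
      (∀ v, L v = -jet k n ((∂_{v} f : 𝓢(E, ℂ)).compSubConstCLM ℂ x)) ∧
      HasFDerivAt (fun x => jet k n (f.compSubConstCLM ℂ x)) L x := by
  let L₀ : E →ₗ[ℝ] JetSpace E n :=
    { toFun := fun v => -jet k n ((∂_{v} f : 𝓢(E, ℂ)).compSubConstCLM ℂ x)
      map_add' := fun v w => by
        rw [LineDeriv.lineDerivOp_left_add, map_add, map_add, neg_add]
      map_smul' := fun c v => by
        rw [LineDeriv.lineDerivOp_left_smul]
        have : (c • (∂_{v} f : 𝓢(E, ℂ))) = (c : ℂ) • (∂_{v} f : 𝓢(E, ℂ)) := by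
          ext y; simp
        rw [this, map_smul, map_smul, RingHom.id_apply, ← smul_neg]
        exact Complex.coe_smul c _ }
  refine ⟨LinearMap.toContinuousLinearMap L₀, fun v => rfl, ?_⟩
  rw [hasFDerivAt_iff_isLittleO_nhds_zero]
  refine Asymptotics.IsBigO.trans_isLittleO (g := fun h : E => ‖h‖ ^ 2) ?_ ?_
  · refine Asymptotics.IsBigO.of_bound (‖jet k (n + 2) (f.compSubConstCLM ℂ x)‖ * 2 ^ k) ?_
    filter_upwards [Metric.closedBall_mem_nhds (0 : E) one_pos] with h hh
    have hh' : ‖h‖ ≤ 1 := by simpa using hh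
    have e : jet k n (f.compSubConstCLM ℂ (x + h)) - jet k n (f.compSubConstCLM ℂ x)
        - LinearMap.toContinuousLinearMap L₀ h
        = jet k n ((f.compSubConstCLM ℂ x).compSubConstCLM ℂ h - f.compSubConstCLM ℂ x
          + ∂_{h} (f.compSubConstCLM ℂ x)) := by
      rw [map_add, map_sub, SchwartzMap.compSubConstCLM_comp, lineDerivOp_compSubConstCLM]
      change _ - -_ = _
      rw [sub_neg_eq_add]
    rw [e, norm_pow, norm_norm]
    refine (norm_jet_compSubConstCLM_sub_add_le k n h _).trans ?_
    gcongr
    linarith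
  · exact (Asymptotics.isLittleO_pow_id one_lt_two).comp_tendsto tendsto_norm_zero
      |>.norm_right.congr_right (by simp) |>.of_norm_right

end Jet

section JetCurve
variable {E : Type*} [NormedAddCommGroup E] [NormedSpace ℝ E] [FiniteDimensional ℝ E]

lemma differentiable_jet_compSubConstCLM (k n : ℕ) (f : 𝓢(E, ℂ)) :
    Differentiable ℝ (fun x => jet k n (f.compSubConstCLM ℂ x)) := fun x =>
  let ⟨_, _, h⟩ := hasFDerivAt_jet_compSubConstCLM k n f x
  h.differentiableAt

lemma fderiv_jet_compSubConstCLM_apply (k n : ℕ) (f : 𝓢(E, ℂ)) (x v : E) :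
    fderiv ℝ (fun x => jet k n (f.compSubConstCLM ℂ x)) x v
      = -jet k n ((∂_{v} f : 𝓢(E, ℂ)).compSubConstCLM ℂ x) := by
  obtain ⟨L, hL, h⟩ := hasFDerivAt_jet_compSubConstCLM k n f x
  rw [h.fderiv, hL]

lemma contDiff_jet_compSubConstCLM (k n : ℕ) (f : 𝓢(E, ℂ)) :
    ContDiff ℝ ∞ (fun x => jet k n (f.compSubConstCLM ℂ x)) := by
  refine contDiff_infty.2 fun m => ?_
  induction m generalizing f with
  | zero =>
    simpa using (differentiable_jet_compSubConstCLM k n f).continuous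
  | succ m ih =>
    rw [Nat.cast_add, Nat.cast_one, contDiff_succ_iff_fderiv_apply]
    refine ⟨differentiable_jet_compSubConstCLM k n f, fun h => by simp at h, fun v => ?_⟩
    simp_rw [fderiv_jet_compSubConstCLM_apply]
    exact (ih _).neg

lemma norm_iteratedFDeriv_jet_compSubConstCLM_le (k n i : ℕ) (f : 𝓢(E, ℂ)) (x : E) :
    ‖iteratedFDeriv ℝ i (fun x => jet k n (f.compSubConstCLM ℂ x)) x‖
      ≤ (1 + ‖x‖) ^ k * ‖jet k (n + i) f‖ := by
  induction i generalizing f with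
  | zero =>
    rw [norm_iteratedFDeriv_zero]
    exact norm_jet_compSubConstCLM_le k n x f
  | succ i ih =>
    refine ContinuousMultilinearMap.opNorm_le_bound (by positivity) fun m => ?_
    have hc : ContDiff ℝ ∞ (fderiv ℝ (fun x => jet k n (f.compSubConstCLM ℂ x))) :=
      (contDiff_jet_compSubConstCLM k n f).fderiv_right (by simp)
    have e : (fun x => fderiv ℝ (fun x => jet k n (f.compSubConstCLM ℂ x)) x (m (Fin.last i)))
        = -fun x => jet k n ((∂_{m (Fin.last i)} f : 𝓢(E, ℂ)).compSubConstCLM ℂ x) :=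
      funext fun x => fderiv_jet_compSubConstCLM_apply k n f x _
    rw [iteratedFDeriv_succ_apply_right,
      ← iteratedFDeriv_clm_apply_const_apply hc (mod_cast le_top), e, iteratedFDeriv_neg_apply,
      neg_apply, norm_neg]
    calc _ ≤ ‖iteratedFDeriv ℝ i (fun x =>
            jet k n ((∂_{m (Fin.last i)} f : 𝓢(E, ℂ)).compSubConstCLM ℂ x)) x‖
            * ∏ j, ‖Fin.init m j‖ := ContinuousMultilinearMap.le_opNorm _ _
      _ ≤ ((1 + ‖x‖) ^ k * (‖m (Fin.last i)‖ * ‖jet k (n + i + 1) f‖))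
            * ∏ j, ‖Fin.init m j‖ := by
          gcongr
          refine (ih _).trans ?_
          gcongr
          exact norm_jet_lineDerivOp_le k (n + i) _ f
      _ = _ := by
          rw [Fin.prod_univ_castSucc, ← add_assoc]
          simp only [Fin.init]
          ring

end JetCurve

section Extension
variable {E : Type*} [NormedAddCommGroup E] [NormedSpace ℝ E]

lemma seminorm_le_norm_jet {k' n' k n : ℕ} (hk : k' ≤ k) (hn : n' ≤ n) (f : 𝓢(E, ℂ)) :
    SchwartzMap.seminorm ℂ k' n' f ≤ ‖jet k n f‖ := by
  refine SchwartzMap.seminorm_le_bound ℂ k' n' f (norm_nonneg _) fun y => ?_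
  refine le_trans ?_ (le_norm_jet (k := k) hn f y)
  gcongr
  calc ‖y‖ ^ k' ≤ (1 + ‖y‖) ^ k' := by gcongr; linarith
    _ ≤ (1 + ‖y‖) ^ k := pow_le_pow_right₀ (by linarith [norm_nonneg y]) hk

lemma exists_norm_le_norm_jet (u : 𝓢(E, ℂ) →L[ℂ] ℂ) :
    ∃ k n : ℕ, ∃ C : ℝ, ∀ f, ‖u f‖ ≤ C * ‖jet k n f‖ := by
  obtain ⟨s, C, -, h⟩ := Seminorm.bound_of_continuous (schwartz_withSeminorms ℂ E ℂ)
    ((normSeminorm ℂ ℂ).comp u.toLinearMap) (u.continuous.norm)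
  refine ⟨s.sup Prod.fst, s.sup Prod.snd, C, fun f => (h f).trans ?_⟩
  change C * (s.sup (schwartzSeminormFamily ℂ E ℂ)) f ≤ _
  gcongr
  refine Seminorm.finset_sup_apply_le (norm_nonneg _) fun m hm => ?_
  exact seminorm_le_norm_jet (Finset.le_sup (f := Prod.fst) hm) (Finset.le_sup (f := Prod.snd) hm) f

/-- A tempered distribution factors through a jet space, by the Hahn-Banach theorem. -/
lemma exists_eq_comp_jet (u : 𝓢(E, ℂ) →L[ℂ] ℂ) :
    ∃ k n : ℕ, ∃ u' : JetSpace E n →L[ℂ] ℂ, ∀ f, u f = u' (jet k n f) := by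
  obtain ⟨k, n, C, hC⟩ := exists_norm_le_norm_jet u
  have hinj : Function.Injective (jet k n : 𝓢(E, ℂ) →ₗ[ℂ] JetSpace E n) := by
    rw [injective_iff_map_eq_zero]
    intro f hf
    ext y
    have h := le_norm_jet (k := k) (Nat.zero_le n) f y
    rw [hf, norm_zero, norm_iteratedFDeriv_zero] at h
    have : ‖f y‖ ≤ 0 := by
      by_contra! h'
      exact absurd h (not_le.2 (by positivity))
    simpa using this
  let e := LinearEquiv.ofInjective _ hinj
  have he : ∀ f, jet k n f = (e f : JetSpace E n) := fun f => rfl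
  let v : LinearMap.range (jet k n : 𝓢(E, ℂ) →ₗ[ℂ] JetSpace E n) →L[ℂ] ℂ :=
    (u.toLinearMap ∘ₗ e.symm.toLinearMap).mkContinuous C fun w => by
      refine (hC (e.symm w)).trans_eq ?_
      rw [he, e.apply_symm_apply, Submodule.coe_norm]
  obtain ⟨u', hu', -⟩ := exists_extension_norm_eq _ v
  refine ⟨k, n, u', fun f => ?_⟩
  rw [he, hu']
  change u f = u (e.symm (e f))
  rw [e.symm_apply_apply]

end Extension

section Scaled

/-- The reflected rescaling `y ↦ ρ_t(-y)` of a Schwartz function. -/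
noncomputable def scaledNeg {d : ℕ} (ρ : 𝓢(Fin d → ℝ, ℂ)) (t : ℝ) (ht : 0 < t) :
    𝓢(Fin d → ℝ, ℂ) :=
  ((t ^ (-(d : ℤ)) : ℝ) : ℂ) • SchwartzMap.compCLMOfContinuousLinearEquiv ℂ
    (ContinuousLinearEquiv.smulLeft (Units.mk0 (-t⁻¹) (by simpa using ht.ne'))) ρ

lemma scaledNeg_apply {d : ℕ} (ρ : 𝓢(Fin d → ℝ, ℂ)) {t : ℝ} (ht : 0 < t) (y : Fin d → ℝ) :
    scaledNeg ρ t ht y = ((t ^ (-(d : ℤ)) : ℝ) : ℂ) • ρ ((-t⁻¹) • y) := rfl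

lemma compSubConstCLM_scaledNeg_apply {d : ℕ} (ρ : 𝓢(Fin d → ℝ, ℂ)) {t : ℝ} (ht : 0 < t)
    (x y : Fin d → ℝ) : (scaledNeg ρ t ht).compSubConstCLM ℂ x y = scaled ρ t (x - y) := by
  rw [SchwartzMap.compSubConstCLM_apply, scaledNeg_apply, scaled, neg_smul, ← smul_neg, neg_sub,
    smul_eq_mul]

lemma iteratedFDeriv_scaledNeg {d : ℕ} (ρ : 𝓢(Fin d → ℝ, ℂ)) {t : ℝ} (ht : 0 < t) (i : ℕ)
    (y : Fin d → ℝ) : iteratedFDeriv ℝ i (scaledNeg ρ t ht) y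
      = ((t ^ (-(d : ℤ)) : ℝ) : ℂ) • (-t⁻¹) ^ i • iteratedFDeriv ℝ i ρ ((-t⁻¹) • y) := by
  have h₁ : ⇑(scaledNeg ρ t ht)
      = fun y => ((t ^ (-(d : ℤ)) : ℝ) : ℂ) • ρ ((-t⁻¹) • y) := rfl
  have h₂ : ContDiff ℝ i (fun y => ρ ((-t⁻¹) • y)) :=
    (ρ.smooth i).comp (contDiff_const_smul _)
  rw [h₁, iteratedFDeriv_const_smul_apply' h₂.contDiffAt,
    iteratedFDeriv_comp_const_smul _ (ρ.smooth i)]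

lemma norm_jet_scaledNeg_le {d : ℕ} (k n : ℕ) (ρ : 𝓢(Fin d → ℝ, ℂ)) {t : ℝ} (ht : 0 < t)
    (ht1 : t ≤ 1) :
    ‖jet k n (scaledNeg ρ t ht)‖ ≤ t ^ (-((d + n : ℕ) : ℤ)) * ‖jet k n ρ‖ := by
  refine norm_jet_le (by positivity) fun i hi y => ?_
  have h1 : 1 ≤ t⁻¹ := (one_le_inv₀ ht).2 ht1
  rw [iteratedFDeriv_scaledNeg, norm_smul, norm_smul, Complex.norm_real,
    Real.norm_of_nonneg (by positivity), norm_pow, norm_neg, Real.norm_of_nonneg (by positivity),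
    zpow_neg, zpow_neg, zpow_natCast, zpow_natCast, ← inv_pow, ← inv_pow, pow_add]
  calc (1 + ‖y‖) ^ k * (t⁻¹ ^ d * (t⁻¹ ^ i * ‖iteratedFDeriv ℝ i ρ ((-t⁻¹) • y)‖))
      ≤ (1 + ‖(-t⁻¹) • y‖) ^ k * (t⁻¹ ^ d * (t⁻¹ ^ n * ‖iteratedFDeriv ℝ i ρ ((-t⁻¹) • y)‖)) := by
        gcongr
        · rw [norm_smul, norm_neg, Real.norm_of_nonneg (by positivity)]
          exact le_mul_of_one_le_left (norm_nonneg _) h1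
    _ = t⁻¹ ^ d * t⁻¹ ^ n * ((1 + ‖(-t⁻¹) • y‖) ^ k * ‖iteratedFDeriv ℝ i ρ ((-t⁻¹) • y)‖) := by
        ring
    _ ≤ _ := by gcongr; exact le_norm_jet hi ρ _

end Scaled

lemma mu_neg_le {E : Type*} [NormedAddCommGroup E] [NormedSpace ℝ E] {q l : ℕ} {f : E → ℂ} {M : ℝ}
    (h : ∀ x, ∀ i ≤ l, ‖iteratedFDeriv ℝ i f x‖ ≤ (1 + ‖x‖) ^ q * M) :
    mu (-(q : ℤ)) l f ≤ ENNReal.ofReal M := by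
  refine iSup_le fun x => iSup_le fun i => iSup_le fun hi => ENNReal.ofReal_le_ofReal ?_
  rw [zpow_neg, zpow_natCast, inv_mul_le_iff₀ (by positivity)]
  exact h x i hi

lemma norm_jet_mono {E : Type*} [NormedAddCommGroup E] [NormedSpace ℝ E] (k : ℕ) {m n : ℕ}
    (h : m ≤ n) (f : 𝓢(E, ℂ)) : ‖jet k m f‖ ≤ ‖jet k n f‖ :=
  norm_jet_le (norm_nonneg _) fun _ hi y => le_norm_jet (hi.trans h) f y

lemma contDiff_apply_jet {E : Type*} [NormedAddCommGroup E] [NormedSpace ℝ E]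
    [FiniteDimensional ℝ E] {k n : ℕ} (u' : JetSpace E n →L[ℂ] ℂ) (f : 𝓢(E, ℂ)) :
    ContDiff ℝ ∞ (fun x => u' (jet k n (f.compSubConstCLM ℂ x))) :=
  (u'.restrictScalars ℝ).contDiff.comp (contDiff_jet_compSubConstCLM k n f)

lemma norm_iteratedFDeriv_apply_jet_le {E : Type*} [NormedAddCommGroup E] [NormedSpace ℝ E]
    [FiniteDimensional ℝ E] {k n i l : ℕ} (hi : i ≤ l) (u' : JetSpace E n →L[ℂ] ℂ) (f : 𝓢(E, ℂ))
    (x : E) : ‖iteratedFDeriv ℝ i (fun x => u' (jet k n (f.compSubConstCLM ℂ x))) x‖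
      ≤ (1 + ‖x‖) ^ k * (‖u'‖ * ‖jet k (n + l) f‖) := by
  calc _ ≤ ‖u'.restrictScalars ℝ‖ *
        ‖iteratedFDeriv ℝ i (fun x => jet k n (f.compSubConstCLM ℂ x)) x‖ :=
        (u'.restrictScalars ℝ).norm_iteratedFDeriv_comp_left
          (contDiff_jet_compSubConstCLM k n f).contDiffAt (mod_cast le_top)
    _ ≤ ‖u'‖ * ((1 + ‖x‖) ^ k * ‖jet k (n + l) f‖) := by
        rw [ContinuousLinearMap.norm_restrictScalars]
        gcongr
        refine (norm_iteratedFDeriv_jet_compSubConstCLM_le k n i f x).trans ?_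
        gcongr
        exact norm_jet_mono k (by omega) f
    _ = _ := by ring

lemma isEtauNet_of_eq_comp_jet {d k n : ℕ} (u' : JetSpace (Fin d → ℝ) n →L[ℂ] ℂ)
    (ρ : 𝓢(Fin d → ℝ, ℂ)) {uε : ℝ → (Fin d → ℝ) → ℂ}
    (h : ∀ ε, ∀ hε : 0 < ε, ε ≤ 1 →
      uε ε = fun x => u' (jet k n ((scaledNeg ρ ε hε).compSubConstCLM ℂ x))) :
    IsEtauNet uε := by
  have hmu : ∀ ε, 0 < ε → ε ≤ 1 → ∀ l, mu (-(k : ℤ)) l (uε ε)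
      ≤ ENNReal.ofReal ((‖u'‖ * ‖jet k (n + l) ρ‖ + 1) * ε ^ (-((d + (n + l) : ℕ) : ℤ))) := by
    intro ε h0 h1 l
    rw [h ε h0 h1]
    refine mu_neg_le fun x i hi => (norm_iteratedFDeriv_apply_jet_le hi u' _ x).trans ?_
    refine mul_le_mul_of_nonneg_left ?_ (by positivity)
    calc ‖u'‖ * ‖jet k (n + l) (scaledNeg ρ ε h0)‖
        ≤ ‖u'‖ * (ε ^ (-((d + (n + l) : ℕ) : ℤ)) * ‖jet k (n + l) ρ‖) := by
          gcongr; exact norm_jet_scaledNeg_le k (n + l) ρ h0 h1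
      _ ≤ _ := by
          have : 0 ≤ ε ^ (-((d + (n + l) : ℕ) : ℤ)) := by positivity
          linarith
  refine ⟨fun ε hε => ⟨?_, fun l => ⟨k, (hmu ε hε.1 hε.2 l).trans_lt ENNReal.ofReal_lt_top⟩⟩,
    fun l => ⟨k, d + (n + l), _, ?_, 1, one_pos, fun ε h0 h1 => hmu ε h0 h1 l⟩⟩
  · rw [h ε hε.1 hε.2]
    exact contDiff_apply_jet u' _
  · positivity

section Convolution

variable {E : Type*} [NormedAddCommGroup E] [NormedSpace ℝ E] [FiniteDimensional ℝ E]
  [MeasurableSpace E] [BorelSpace E] {μ : Measure E}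

lemma integrable_smul_comp_sub {F : Type*} [NormedAddCommGroup F] [NormedSpace ℂ F]
    {φ : E → ℂ} (hφ : Integrable φ μ) {G : E → F} (hG : Continuous G) {C : ℝ}
    (hC : ∀ y, ‖G y‖ ≤ C) (y : E) : Integrable (fun x => φ x • G (y - x)) μ := by
  have hm : Continuous fun x => G (y - x) := by fun_prop
  exact hφ.smul_bdd C hm.aestronglyMeasurable (ae_of_all _ fun x => hC _)

lemma hasFDerivAt_integral_smul_comp_sub {F : Type*} [NormedAddCommGroup F] [NormedSpace ℝ F]
    [NormedSpace ℂ F] [SMulCommClass ℝ ℂ F] {φ : E → ℂ} (hφ : Integrable φ μ) {G : E → F}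
    (hG : ContDiff ℝ 1 G) {C₀ C₁ : ℝ} (hC₀ : ∀ y, ‖G y‖ ≤ C₀) (hC₁ : ∀ y, ‖fderiv ℝ G y‖ ≤ C₁)
    (y : E) : HasFDerivAt (fun y => ∫ x, φ x • G (y - x) ∂μ)
      (∫ x, φ x • fderiv ℝ G (y - x) ∂μ) y := by
  have hG' : Continuous (fderiv ℝ G) := hG.continuous_fderiv one_ne_zero
  refine hasFDerivAt_integral_of_dominated_of_fderiv_le (𝕜 := ℝ) (s := Set.univ)
    (bound := fun x => ‖φ x‖ * C₁) univ_mem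
    (Eventually.of_forall fun z => (integrable_smul_comp_sub hφ hG.continuous hC₀ z).1)
    (integrable_smul_comp_sub hφ hG.continuous hC₀ y)
    (F' := fun y x => φ x • fderiv ℝ G (y - x))
    (integrable_smul_comp_sub hφ hG' hC₁ y).1
    (ae_of_all _ fun x z _ => ?_) (hφ.norm.mul_const _) (ae_of_all _ fun x z _ => ?_)
  · rw [norm_smul]
    gcongr
    exact hC₁ _
  · have h : HasFDerivAt (fun z => G (z - x)) (fderiv ℝ G (z - x)) z := by
      rw [hasFDerivAt_comp_sub]
      exact (hG.differentiable one_ne_zero _).hasFDerivAt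
    exact h.const_smul (φ x)

lemma iteratedFDeriv_integral_smul_comp_sub {φ : E → ℂ} (hφ : Integrable φ μ) (f : 𝓢(E, ℂ))
    (i : ℕ) : iteratedFDeriv ℝ i (fun y => ∫ x, φ x • f (y - x) ∂μ)
      = fun y => ∫ x, φ x • iteratedFDeriv ℝ i f (y - x) ∂μ := by
  have hb : ∀ i y, ‖iteratedFDeriv ℝ i f y‖ ≤ ‖jet 0 i f‖ := fun i y => by
    simpa using le_norm_jet (k := 0) le_rfl f y
  induction i with
  | zero =>
    funext y
    exact ((continuousMultilinearCurryFin0 ℝ E ℂ).symm.toContinuousLinearEquiv.integral_comp_comm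
      _).symm
  | succ i ih =>
    funext y
    have hsm : ContDiff ℝ 1 (iteratedFDeriv ℝ i f) :=
      (f.smooth ⊤).iteratedFDeriv_right (m := 1) (i := i) (by exact_mod_cast le_top)
    rw [iteratedFDeriv_succ_eq_comp_left, ih, Function.comp_apply,
      (hasFDerivAt_integral_smul_comp_sub hφ hsm (hb i)
        (fun y => (norm_fderiv_iteratedFDeriv (f := f)).trans_le (hb (i + 1) y)) y).fderiv]
    let e : (E →L[ℝ] E [×i]→L[ℝ] ℂ) ≃L[ℝ] (E [×(i + 1)]→L[ℝ] ℂ) :=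
      (continuousMultilinearCurryLeftEquiv ℝ
        (fun _ : Fin (i + 1) => E) ℂ).symm.toContinuousLinearEquiv
    exact (ContinuousLinearEquiv.integral_comp_comm (𝕜 := ℝ) (E := E →L[ℝ] E [×i]→L[ℝ] ℂ)
      (F := E [×(i + 1)]→L[ℝ] ℂ) (μ := μ) e
      (fun x => φ x • fderiv ℝ (iteratedFDeriv ℝ i f) (y - x))).symm

variable [μ.IsAddHaarMeasure]

lemma SchwartzMap.integrable_one_add_norm_pow_mul (φ : 𝓢(E, ℂ)) (k : ℕ) :
    Integrable (fun x => (1 + ‖x‖) ^ k * ‖φ x‖) μ := by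
  simp_rw [add_comm (1 : ℝ), add_pow, one_pow, mul_one, Finset.sum_mul]
  refine integrable_finsetSum _ fun m _ => ?_
  simp_rw [mul_right_comm _ _ (‖φ _‖)]
  exact (φ.integrable_pow_mul μ m).mul_const _

lemma integrable_smul_jet_compSubConstCLM (k n : ℕ) (φ f : 𝓢(E, ℂ)) :
    Integrable (fun x => φ x • jet k n (f.compSubConstCLM ℂ x)) μ := by
  refine ((φ.integrable_one_add_norm_pow_mul k).mul_const ‖jet k n f‖).mono'
    (φ.continuous.smul (differentiable_jet_compSubConstCLM k n f).continuous).aestronglyMeasurable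
    (ae_of_all _ fun x => ?_)
  rw [norm_smul]
  calc _ ≤ ‖φ x‖ * ((1 + ‖x‖) ^ k * ‖jet k n f‖) := by
        gcongr; exact norm_jet_compSubConstCLM_le k n x f
    _ = _ := by ring

lemma evalCLM_integral_smul_jet (k n : ℕ) (φ f : 𝓢(E, ℂ)) (i : Fin (n + 1)) (y : E) :
    JetSpace.evalCLM i y (∫ x, φ x • jet k n (f.compSubConstCLM ℂ x) ∂μ)
      = ((1 + ‖y‖) ^ k : ℝ) • iteratedFDeriv ℝ i (fun y => ∫ x, φ x • f (y - x) ∂μ) y := by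
  rw [← ContinuousLinearMap.integral_comp_comm _ (integrable_smul_jet_compSubConstCLM k n φ f),
    iteratedFDeriv_integral_smul_comp_sub φ.integrable f i, ← integral_smul]
  refine integral_congr_ae (ae_of_all _ fun x => ?_)
  simp only [map_smul, evalCLM_jet, iteratedFDeriv_compSubConstCLM]
  rw [smul_comm]

lemma integral_smul_jet_comm (k n : ℕ) (φ f : 𝓢(E, ℂ)) :
    ∫ x, φ x • jet k n (f.compSubConstCLM ℂ x) ∂μ
      = ∫ x, f x • jet k n (φ.compSubConstCLM ℂ x) ∂μ := by
  refine JetSpace.ext_evalCLM fun i y => ?_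
  rw [evalCLM_integral_smul_jet, evalCLM_integral_smul_jet]
  congr 3
  funext y
  rw [← integral_sub_left_eq_self _ μ y]
  simp only [sub_sub_cancel, smul_eq_mul, mul_comm]

end Convolution

section Approximation

variable {d : ℕ}

lemma integral_scaledNeg (ρ : 𝓢(Fin d → ℝ, ℂ)) {t : ℝ} (ht : 0 < t) :
    ∫ z, scaledNeg ρ t ht z = ∫ z, ρ z := by
  simp_rw [scaledNeg_apply]
  rw [integral_smul, Measure.integral_comp_smul]
  simp [ht.ne', abs_of_pos ht]

lemma norm_integral_scaledNeg_smul_jet_sub_le (k n : ℕ) {ρ : 𝓢(Fin d → ℝ, ℂ)}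
    (hρ : ∫ z, ρ z = 1) (φ : 𝓢(Fin d → ℝ, ℂ)) {t : ℝ} (ht : 0 < t) (ht1 : t ≤ 1) :
    ‖(∫ z, scaledNeg ρ t ht z • jet k n (φ.compSubConstCLM ℂ z)) - jet k n φ‖
      ≤ ‖jet k (n + 1) φ‖ * (∫ w, (1 + ‖w‖) ^ (k + 1) * ‖ρ w‖) * t := by
  have hsub : (∫ z, scaledNeg ρ t ht z • jet k n (φ.compSubConstCLM ℂ z)) - jet k n φ
      = ∫ z, scaledNeg ρ t ht z • jet k n (φ.compSubConstCLM ℂ z - φ) := by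
    have h1 : jet k n φ = ∫ z, scaledNeg ρ t ht z • jet k n φ := by
      rw [integral_smul_const, integral_scaledNeg, hρ, one_smul]
    simp_rw [map_sub, smul_sub]
    rw [integral_sub (integrable_smul_jet_compSubConstCLM k n _ φ)
      ((scaledNeg ρ t ht).integrable.smul_const _), ← h1]
  rw [hsub]
  have hM := ρ.integrable_one_add_norm_pow_mul (μ := volume) (k + 1)
  set M : (Fin d → ℝ) → ℝ := fun w => (1 + ‖w‖) ^ (k + 1) * ‖ρ w‖ with hMdef
  have hint : Integrable fun z : Fin d → ℝ =>
      ‖jet k (n + 1) φ‖ * t * (t ^ (-(d : ℤ)) * M ((-t⁻¹) • z)) :=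
    ((hM.comp_smul (by simpa using ht.ne')).const_mul _).const_mul _
  refine (norm_integral_le_of_norm_le hint (ae_of_all _ fun z => ?_)).trans_eq ?_
  · have hz : ‖z‖ = t * ‖(-t⁻¹) • z‖ := by
      rw [norm_smul, norm_neg, norm_inv, Real.norm_of_nonneg ht.le, mul_inv_cancel_left₀ ht.ne']
    set w := (-t⁻¹) • z with hw
    rw [norm_smul, scaledNeg_apply, ← hw, norm_smul, Complex.norm_real,
      Real.norm_of_nonneg (by positivity)]
    calc _ ≤ t ^ (-(d : ℤ)) * ‖ρ w‖ * (‖jet k (n + 1) φ‖ * (1 + ‖z‖) ^ k * ‖z‖) := by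
          gcongr; exact norm_jet_compSubConstCLM_sub_le k n z φ
      _ ≤ t ^ (-(d : ℤ)) * ‖ρ w‖ * (‖jet k (n + 1) φ‖ * (1 + ‖w‖) ^ k * (t * (1 + ‖w‖))) := by
          rw [hz]
          gcongr
          · exact mul_le_of_le_one_left (norm_nonneg _) ht1
          · linarith
      _ = _ := by simp only [hMdef]; ring
  · rw [integral_const_mul, integral_const_mul, Measure.integral_comp_smul]
    have : t ^ d ≠ 0 := (pow_pos ht d).ne'
    simp [abs_of_pos ht, this]
    ring

lemma norm_apply_jet_le (k n : ℕ) (u' : JetSpace (Fin d → ℝ) n →L[ℂ] ℂ) {ρ : 𝓢(Fin d → ℝ, ℂ)}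
    (hρ : ∫ z, ρ z = 1) (φ : 𝓢(Fin d → ℝ, ℂ)) {t : ℝ} (ht : 0 < t) (ht1 : t ≤ 1) {q : ℕ} {A : ℝ}
    (hA : ∀ x, ‖u' (jet k n ((scaledNeg ρ t ht).compSubConstCLM ℂ x))‖ ≤ (1 + ‖x‖) ^ q * A) :
    ‖u' (jet k n φ)‖
      ≤ ‖u'‖ * (‖jet k (n + 1) φ‖ * (∫ w, (1 + ‖w‖) ^ (k + 1) * ‖ρ w‖) * t)
        + (∫ x, (1 + ‖x‖) ^ q * ‖φ x‖) * A := by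
  set I := ∫ z, scaledNeg ρ t ht z • jet k n (φ.compSubConstCLM ℂ z) with hI
  have h1 : ‖u' (I - jet k n φ)‖
      ≤ ‖u'‖ * (‖jet k (n + 1) φ‖ * (∫ w, (1 + ‖w‖) ^ (k + 1) * ‖ρ w‖) * t) :=
    (u'.le_opNorm _).trans (by
      gcongr; exact norm_integral_scaledNeg_smul_jet_sub_le k n hρ φ ht ht1)
  have h2 : ‖u' I‖ ≤ (∫ x, (1 + ‖x‖) ^ q * ‖φ x‖) * A := by
    rw [hI, ← integral_smul_jet_comm,
      ← u'.integral_comp_comm (integrable_smul_jet_compSubConstCLM k n φ _), ← integral_mul_const]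
    refine norm_integral_le_of_norm_le ((φ.integrable_one_add_norm_pow_mul q).mul_const A)
      (ae_of_all _ fun x => ?_)
    rw [map_smul, norm_smul]
    calc _ ≤ ‖φ x‖ * ((1 + ‖x‖) ^ q * A) := by gcongr; exact hA x
      _ = _ := by ring
  calc ‖u' (jet k n φ)‖ = ‖u' I - u' (I - jet k n φ)‖ := by rw [map_sub, sub_sub_cancel]
    _ ≤ ‖u' I‖ + ‖u' (I - jet k n φ)‖ := norm_sub_le _ _
    _ ≤ _ := by linarith

lemma norm_le_of_mu_neg_le {E : Type*} [NormedAddCommGroup E] [NormedSpace ℝ E] {q l : ℕ}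
    {f : E → ℂ} {M : ℝ} (hM : 0 ≤ M) (h : mu (-(q : ℤ)) l f ≤ ENNReal.ofReal M) (x : E) :
    ‖f x‖ ≤ (1 + ‖x‖) ^ q * M := by
  have h' : ENNReal.ofReal ((1 + ‖x‖) ^ (-(q : ℤ)) * ‖iteratedFDeriv ℝ 0 f x‖)
      ≤ ENNReal.ofReal M := by
    refine le_trans ?_ h
    refine le_iSup_of_le x ?_
    refine le_iSup_of_le 0 ?_
    exact le_iSup_of_le (Nat.zero_le l) le_rfl
  rwa [ENNReal.ofReal_le_ofReal_iff hM, norm_iteratedFDeriv_zero, zpow_neg, zpow_natCast,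
    inv_mul_le_iff₀ (by positivity)] at h'

lemma apply_jet_eq_zero_of_isNtauNet {k n : ℕ} (u' : JetSpace (Fin d → ℝ) n →L[ℂ] ℂ)
    {ρ : 𝓢(Fin d → ℝ, ℂ)} (hρ : ∫ z, ρ z = 1) {uε : ℝ → (Fin d → ℝ) → ℂ}
    (h : ∀ ε, ∀ hε : 0 < ε, ε ≤ 1 →
      uε ε = fun x => u' (jet k n ((scaledNeg ρ ε hε).compSubConstCLM ℂ x)))
    (hN : IsNtauNet uε) (φ : 𝓢(Fin d → ℝ, ℂ)) : u' (jet k n φ) = 0 := by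
  obtain ⟨q, hq⟩ := hN.2 0
  obtain ⟨C, hC, η, hη, hmu⟩ := hq 1
  set K := ‖u'‖ * (‖jet k (n + 1) φ‖ * ∫ w, (1 + ‖w‖) ^ (k + 1) * ‖ρ w‖)
    + (∫ x, (1 + ‖x‖) ^ q * ‖φ x‖) * C with hK
  have hlim : Tendsto (fun ε : ℝ => K * ε) (nhdsWithin 0 (Set.Ioi 0)) (nhds 0) := by
    have : Tendsto (fun ε : ℝ => K * ε) (nhds 0) (nhds (K * 0)) := tendsto_id.const_mul K
    rw [mul_zero] at this
    exact this.mono_left nhdsWithin_le_nhds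
  have hev : ∀ᶠ ε : ℝ in nhdsWithin 0 (Set.Ioi 0), ‖u' (jet k n φ)‖ ≤ K * ε := by
    filter_upwards [Ioc_mem_nhdsGT (lt_min hη one_pos)] with ε hε
    have h0 := hε.1
    have hη' := hε.2.trans (min_le_left _ _)
    have h1 := hε.2.trans (min_le_right _ _)
    have hb := norm_le_of_mu_neg_le (by positivity) (hmu ε h0 hη')
    rw [h ε h0 h1] at hb
    refine (norm_apply_jet_le k n u' hρ φ h0 h1 hb).trans_eq ?_
    rw [hK]
    ring
  exact norm_le_zero_iff.1 (ge_of_tendsto hlim hev)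

end Approximation

/-- the regularization net of a tempered distribution belongs to `E_τ(ℝ^d)`
and the induced embedding `ι_τ : 𝓢'(ℝ^d) → G_τ(ℝ^d)` is injective. -/
theorem stmt2 (d : ℕ) (hd : 1 ≤ d)
    (u : SchwartzMap (Fin d → ℝ) ℂ →L[ℂ] ℂ)
    (ρ : SchwartzMap (Fin d → ℝ) ℂ) (hρ : IsMollifier ρ)
    (uε : ℝ → (Fin d → ℝ) → ℂ)
    (huε : ∀ ε ∈ Set.Ioc (0:ℝ) 1, ∀ x : Fin d → ℝ, ∀ g : SchwartzMap (Fin d → ℝ) ℂ,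
      (∀ y, g y = scaled ⇑ρ ε (x - y)) → uε ε x = u g) :
    IsEtauNet uε ∧ (IsNtauNet uε → u = 0) := by
  obtain ⟨k, n, u', hu'⟩ := exists_eq_comp_jet u
  have h : ∀ ε, ∀ hε : 0 < ε, ε ≤ 1 →
      uε ε = fun x => u' (jet k n ((scaledNeg ρ ε hε).compSubConstCLM ℂ x)) := by
    intro ε h0 h1
    funext x
    rw [huε ε ⟨h0, h1⟩ x _ (compSubConstCLM_scaledNeg_apply ρ h0 x), hu']
  refine ⟨isEtauNet_of_eq_comp_jet u' ρ h, fun hN => ?_⟩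
  ext φ
  rw [hu', apply_jet_eq_zero_of_isNtauNet u' hρ.1 h hN φ]
  rfl
end

section
/- Let ρ be a mollifier on ℝ^d and let f : ℝ^d → ℂ be a smooth function belonging to O_C(ℝ^d), i.e. there exists q ∈ ℕ such that μ_{-q,l}(f) < +∞ for every l ∈ ℕ. Then the net ((f ∗ ρ_ε) − f)_{ε∈(0,1]}, where (f ∗ ρ_ε)(x) = ∫_{ℝ^d} f(x−y) ρ_ε(y) dy, belongs to N_τ(ℝ^d). (Thus the regularization embedding ι_τ agrees with the constant embedding σ_τ on O_C(ℝ^d).) -/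
open MeasureTheory Filter

open scoped ContDiff

/-- `g` is smooth and all of its derivatives are bounded by multiples of `(1 + ‖x‖) ^ q`, with `q`
independent of the order of the derivative. -/
def HasUniformPolyGrowth {E G : Type*} [NormedAddCommGroup E] [NormedSpace ℝ E]
    [NormedAddCommGroup G] [NormedSpace ℝ G] (q : ℕ) (g : E → G) : Prop :=
  ContDiff ℝ ∞ g ∧ ∀ k : ℕ, ∃ C : ℝ, 0 ≤ C ∧ ∀ x, ‖iteratedFDeriv ℝ k g x‖ ≤ C * (1 + ‖x‖) ^ q

namespace HasUniformPolyGrowth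

variable {E G H : Type*} [NormedAddCommGroup E] [NormedSpace ℝ E]
  [NormedAddCommGroup G] [NormedSpace ℝ G] [NormedAddCommGroup H] [NormedSpace ℝ H]
  {q : ℕ} {g : E → G}

theorem fderiv (hg : HasUniformPolyGrowth q g) : HasUniformPolyGrowth q (fderiv ℝ g) := by
  refine ⟨hg.1.fderiv_right (by simp), fun k => ?_⟩
  simpa only [norm_iteratedFDeriv_fderiv] using hg.2 (k + 1)

theorem linearIsometryEquiv_comp (hg : HasUniformPolyGrowth q g) (L : G ≃ₗᵢ[ℝ] H) :
    HasUniformPolyGrowth q (L ∘ g) := by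
  refine ⟨L.contDiff.comp hg.1, fun k => ?_⟩
  simpa only [L.norm_iteratedFDeriv_comp_left] using hg.2 k

theorem iteratedFDeriv (hg : HasUniformPolyGrowth q g) (i : ℕ) :
    HasUniformPolyGrowth q (iteratedFDeriv ℝ i g) := by
  induction i with
  | zero =>
    rw [iteratedFDeriv_zero_eq_comp]
    exact hg.linearIsometryEquiv_comp _
  | succ i ih =>
    rw [iteratedFDeriv_succ_eq_comp_left]
    exact ih.fderiv.linearIsometryEquiv_comp _

theorem exists_norm_le (hg : HasUniformPolyGrowth q g) :
    ∃ C : ℝ, 0 ≤ C ∧ ∀ x, ‖g x‖ ≤ C * (1 + ‖x‖) ^ q := by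
  simpa only [norm_iteratedFDeriv_zero] using hg.2 0

end HasUniformPolyGrowth

theorem one_add_norm_add_pow_le {E : Type*} [SeminormedAddCommGroup E] (q : ℕ) {x w z : E}
    (h : ‖w‖ ≤ ‖z‖) : (1 + ‖x + w‖) ^ q ≤ (1 + ‖x‖) ^ q * (1 + ‖z‖) ^ q := by
  rw [← mul_pow]
  have := norm_add_le x w
  gcongr
  nlinarith [norm_nonneg x, norm_nonneg z]

section Taylor

variable {E G : Type*} [NormedAddCommGroup E] [NormedSpace ℝ E]
  [NormedAddCommGroup G] [NormedSpace ℝ G] {g : E → G}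

theorem iteratedDeriv_comp_line (hg : ContDiff ℝ ∞ g) (x v : E) (k : ℕ) :
    iteratedDeriv k (fun t : ℝ => g (x + t • v)) =
      fun t => iteratedFDeriv ℝ k g (x + t • v) fun _ => v := by
  induction k with
  | zero => ext t; simp
  | succ k ih =>
    rw [iteratedDeriv_succ, ih]
    ext t
    have h₁ : HasDerivAt (fun t : ℝ => x + t • v) v t := by
      simpa using ((hasDerivAt_id t).smul_const v).const_add x
    have h₂ := ((hg.differentiable_iteratedFDeriv (m := k) (by exact_mod_cast WithTop.coe_lt_top k))
      (x + t • v)).hasFDerivAt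
    have h₃ := (ContinuousMultilinearMap.apply ℝ (fun _ : Fin k => E) G
      fun _ => v).hasFDerivAt.comp_hasDerivAt t (h₂.comp_hasDerivAt t h₁)
    exact h₃.deriv

/-- Taylor's theorem along a segment, with a bound on the remainder. -/
theorem norm_sub_taylor_le (hg : ContDiff ℝ ∞ g) (x v : E) (p : ℕ) {B : ℝ}
    (hB : ∀ t ∈ Set.Icc (0 : ℝ) 1, ‖iteratedFDeriv ℝ (p + 1) g (x + t • v)‖ ≤ B) :
    ‖g (x + v) - ∑ k ∈ Finset.range (p + 1),
      ((k.factorial : ℝ)⁻¹) • iteratedFDeriv ℝ k g x (fun _ => v)‖ ≤ B * ‖v‖ ^ (p + 1) := by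
  set h : ℝ → G := fun t => g (x + t • v) with hh
  have hsm : ContDiff ℝ ∞ h := by fun_prop
  have hder : ∀ (k : ℕ), ∀ t ∈ Set.Icc (0 : ℝ) 1, iteratedDerivWithin k h (Set.Icc 0 1) t =
      iteratedFDeriv ℝ k g (x + t • v) fun _ => v := fun k t ht => by
    rw [iteratedDerivWithin_eq_iteratedDeriv (uniqueDiffOn_Icc zero_lt_one)
      (hsm.contDiffAt.of_le (by exact_mod_cast le_top)) ht, iteratedDeriv_comp_line hg]
  have hB0 : 0 ≤ B := (norm_nonneg _).trans (hB 0 (by simp))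
  have key := taylor_mean_remainder_bound (f := h) (n := p) (C := B * ‖v‖ ^ (p + 1)) (x := 1)
    zero_le_one (hsm.of_le (by exact_mod_cast le_top)).contDiffOn (by simp) fun t ht => by
      rw [hder _ t ht]
      refine (ContinuousMultilinearMap.le_opNorm _ _).trans ?_
      simp only [Finset.prod_const, Finset.card_univ, Fintype.card_fin]
      gcongr
      exact hB t ht
  rw [taylor_within_apply] at key
  simp only [hder _ 0 (by simp : (0 : ℝ) ∈ Set.Icc (0 : ℝ) 1)] at key
  simp only [hh, sub_zero, one_pow, mul_one, one_smul, zero_smul, add_zero] at key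
  refine key.trans (div_le_self (by positivity) ?_)
  exact_mod_cast p.factorial_pos

end Taylor

section Convolution

variable {d : ℕ} {G : Type*} [NormedAddCommGroup G] [NormedSpace ℂ G]

theorem SchwartzMap.integrable_one_add_norm_pow_mul_s3 (ρ : SchwartzMap (Fin d → ℝ) ℂ) (n : ℕ) :
    Integrable fun z => (1 + ‖z‖) ^ n * ‖ρ z‖ := by
  simp_rw [add_comm (1 : ℝ), add_pow, Finset.sum_mul]
  refine integrable_finsetSum _ fun k _ => ?_
  simpa [mul_assoc, mul_comm, mul_left_comm] using
    (ρ.integrable_pow_mul volume k).const_mul (n.choose k : ℝ)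

theorem SchwartzMap.norm_smul_comp_sub_smul_le {C : ℝ} {q : ℕ} {g : (Fin d → ℝ) → G}
    (hC : 0 ≤ C) (hg : ∀ x, ‖g x‖ ≤ C * (1 + ‖x‖) ^ q) {ε : ℝ} (hε : |ε| ≤ 1)
    (ρ : SchwartzMap (Fin d → ℝ) ℂ) (x z : Fin d → ℝ) :
    ‖ρ z • g (x - ε • z)‖ ≤ C * (1 + ‖x‖) ^ q * ((1 + ‖z‖) ^ q * ‖ρ z‖) := by
  have h₁ : ‖-(ε • z)‖ ≤ ‖z‖ := by
    rw [norm_neg, norm_smul, Real.norm_eq_abs]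
    exact mul_le_of_le_one_left (norm_nonneg _) hε
  rw [norm_smul, sub_eq_add_neg]
  calc ‖ρ z‖ * ‖g (x + -(ε • z))‖
      ≤ ‖ρ z‖ * (C * ((1 + ‖x‖) ^ q * (1 + ‖z‖) ^ q)) := by
        gcongr
        exact (hg _).trans (by gcongr; exact one_add_norm_add_pow_le q h₁)
    _ = _ := by ring

variable [NormedSpace ℝ G]

theorem HasUniformPolyGrowth.integrable_smul_comp {q : ℕ} {g : (Fin d → ℝ) → G}
    (hg : HasUniformPolyGrowth q g) {ε : ℝ} (hε : |ε| ≤ 1) (ρ : SchwartzMap (Fin d → ℝ) ℂ)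
    (x : Fin d → ℝ) : Integrable fun z => ρ z • g (x - ε • z) := by
  obtain ⟨C, hC, hb⟩ := hg.exists_norm_le
  have hc : Continuous g := hg.1.continuous
  refine ((ρ.integrable_one_add_norm_pow_mul_s3 q).const_mul (C * (1 + ‖x‖) ^ q)).mono'
    (ρ.continuous.smul (by fun_prop)).aestronglyMeasurable (Eventually.of_forall fun z => ?_)
  exact SchwartzMap.norm_smul_comp_sub_smul_le hC hb hε ρ x z

theorem SchwartzMap.integrable_smul_multilinear_diag (ρ : SchwartzMap (Fin d → ℝ) ℂ) {k : ℕ}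
    (M : (Fin d → ℝ) [×k]→L[ℝ] G) : Integrable fun z => ρ z • M fun _ => z := by
  refine ((ρ.integrable_pow_mul volume k).const_mul ‖M‖).mono'
    (ρ.continuous.smul (by fun_prop)).aestronglyMeasurable (Eventually.of_forall fun z => ?_)
  have := M.le_opNorm fun _ => z
  simp only [Finset.prod_const, Finset.card_univ, Fintype.card_fin] at this
  rw [norm_smul]
  calc ‖ρ z‖ * ‖M fun _ => z‖ ≤ ‖ρ z‖ * (‖M‖ * ‖z‖ ^ k) := by gcongr
    _ = _ := by ring

variable [IsScalarTower ℝ ℂ G]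

theorem HasUniformPolyGrowth.hasFDerivAt_integral {q : ℕ} {g : (Fin d → ℝ) → G}
    (hg : HasUniformPolyGrowth q g) {ε : ℝ} (hε : |ε| ≤ 1) (ρ : SchwartzMap (Fin d → ℝ) ℂ)
    (x : Fin d → ℝ) :
    HasFDerivAt (fun x => ∫ z, ρ z • g (x - ε • z))
      (∫ z, ρ z • _root_.fderiv ℝ g (x - ε • z)) x := by
  obtain ⟨C, hC, hb⟩ := hg.fderiv.exists_norm_le
  refine hasFDerivAt_integral_of_dominated_of_fderiv_le (𝕜 := ℝ) (s := Metric.ball x 1)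
    (F' := fun y z => ρ z • _root_.fderiv ℝ g (y - ε • z))
    (bound := fun z => C * (1 + (‖x‖ + 1)) ^ q * ((1 + ‖z‖) ^ q * ‖ρ z‖))
    (Metric.ball_mem_nhds x one_pos)
    (Eventually.of_forall fun y => (hg.integrable_smul_comp hε ρ y).aestronglyMeasurable)
    (hg.integrable_smul_comp hε ρ x)
    (hg.fderiv.integrable_smul_comp hε ρ x).aestronglyMeasurable
    (Eventually.of_forall fun z y hy => ?_)
    ((ρ.integrable_one_add_norm_pow_mul_s3 q).const_mul _)
    (Eventually.of_forall fun z y _ => ?_)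
  · refine (SchwartzMap.norm_smul_comp_sub_smul_le hC hb hε ρ y z).trans ?_
    have : ‖y‖ ≤ ‖x‖ + 1 := by
      have h₁ := norm_add_le x (y - x)
      rw [add_sub_cancel] at h₁
      have h₂ := mem_ball_iff_norm.1 hy
      linarith
    gcongr
  · have h := ((hg.1.differentiable (by simp)) (y - ε • z)).hasFDerivAt.comp y
      ((hasFDerivAt_id y).sub_const (ε • z))
    exact h.const_smul (ρ z)

variable [CompleteSpace G]

theorem HasUniformPolyGrowth.hasFTaylorSeriesUpTo_integral {q : ℕ} {g : (Fin d → ℝ) → G}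
    (hg : HasUniformPolyGrowth q g) {ε : ℝ} (hε : |ε| ≤ 1) (ρ : SchwartzMap (Fin d → ℝ) ℂ) :
    HasFTaylorSeriesUpTo ∞ (fun x => ∫ z, ρ z • g (x - ε • z))
      fun x i => ∫ z, ρ z • _root_.iteratedFDeriv ℝ i g (x - ε • z) := by
  refine ⟨fun x => ?_, fun m _ x => ?_, fun m _ => ?_⟩
  · have := (continuousMultilinearCurryFin0 ℝ (Fin d → ℝ)
      G).toContinuousLinearEquiv.toContinuousLinearMap.integral_comp_comm
      ((hg.iteratedFDeriv 0).integrable_smul_comp hε ρ x)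
    exact this.symm
  · have h := (hg.iteratedFDeriv m).hasFDerivAt_integral hε ρ x
    let L : ((Fin d → ℝ) [×(m + 1)]→L[ℝ] G) →L[ℝ] (Fin d → ℝ) →L[ℝ] (Fin d → ℝ) [×m]→L[ℝ] G :=
      (continuousMultilinearCurryLeftEquiv ℝ (fun _ : Fin (m + 1) => Fin d → ℝ)
        G).toContinuousLinearEquiv.toContinuousLinearMap
    have := ContinuousLinearMap.integral_comp_comm (𝕜 := ℝ)
      (Fₗ := (Fin d → ℝ) →L[ℝ] (Fin d → ℝ) [×m]→L[ℝ] G) L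
      ((hg.iteratedFDeriv (m + 1)).integrable_smul_comp hε ρ x)
    refine h.congr_fderiv (Eq.trans ?_ this)
    rfl
  · exact continuous_iff_continuousAt.2 fun x =>
      ((hg.iteratedFDeriv m).hasFDerivAt_integral hε ρ x).continuousAt

/-- All moments of positive order of a mollifier vanish. -/
theorem IsMollifier.integral_smul_multilinear_diag {ρ : SchwartzMap (Fin d → ℝ) ℂ}
    (hρ : IsMollifier ρ) {k : ℕ} (hk : k ≠ 0) (M : (Fin d → ℝ) [×k]→L[ℝ] G) :
    ∫ z, ρ z • M (fun _ => z) = 0 := by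
  have hprod : ∀ (r : Fin k → Fin d) (z : Fin d → ℝ), ∏ i, (z (r i) : ℂ) =
      ∏ j, (z j : ℂ) ^ (Finset.univ.filter fun i => r i = j).card := fun r z => by
    simp_rw [← Finset.prod_const]
    exact (Finset.prod_fiberwise' Finset.univ r fun j => (z j : ℂ)).symm
  have hexp : ∀ z : Fin d → ℝ, ρ z • M (fun _ => z) = ∑ r : Fin k → Fin d,
      ((∏ j, (z j : ℂ) ^ (Finset.univ.filter fun i => r i = j).card) * ρ z) •
        M fun i => Pi.single (r i) 1 := fun z => by
    have h₁ : M (fun _ => z) =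
        ∑ r : Fin k → Fin d, (∏ i, z (r i)) • M fun i => Pi.single (r i) 1 := by
      conv_lhs => rw [pi_eq_sum_univ' z]
      rw [M.map_sum]
      exact Finset.sum_congr rfl fun r _ => M.map_smul_univ _ _
    rw [h₁, Finset.smul_sum]
    refine Finset.sum_congr rfl fun r _ => ?_
    rw [← hprod, mul_comm, mul_smul, ← Complex.ofReal_prod]
    congr 1
    exact (algebraMap_smul ℂ _ _).symm
  have hint : ∀ r : Fin k → Fin d, Integrable fun z : Fin d → ℝ =>
      (∏ j, (z j : ℂ) ^ (Finset.univ.filter fun i => r i = j).card) * ρ z := fun r => by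
    refine (ρ.integrable_pow_mul volume k).mono'
      (Continuous.aestronglyMeasurable (by fun_prop)) (Eventually.of_forall fun z => ?_)
    rw [norm_mul, ← hprod, norm_prod]
    gcongr
    refine (Finset.prod_le_prod (g := fun _ => ‖z‖) (fun i _ => norm_nonneg _)
      fun i _ => ?_).trans (by simp)
    rw [Complex.norm_real]
    exact norm_le_pi_norm z _
  simp_rw [hexp]
  rw [integral_finsetSum _ fun r _ => (hint r).smul_const _]
  refine Finset.sum_eq_zero fun r _ => ?_
  rw [integral_smul_const, hρ.2, zero_smul]
  intro h
  have := congrFun h (r ⟨0, Nat.pos_of_ne_zero hk⟩)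
  simp only [Pi.zero_apply, Finset.card_eq_zero, Finset.filter_eq_empty_iff] at this
  exact this (Finset.mem_univ _) rfl

theorem IsMollifier.integral_smul_taylor {ρ : SchwartzMap (Fin d → ℝ) ℂ} (hρ : IsMollifier ρ)
    (M : ∀ k : ℕ, (Fin d → ℝ) [×k]→L[ℝ] G) (c : ℕ → ℝ) (ε : ℝ) (p : ℕ) :
    Integrable (fun z => ρ z • ∑ k ∈ Finset.range (p + 1), c k • M k fun _ => -(ε • z)) ∧
    ∫ z, ρ z • ∑ k ∈ Finset.range (p + 1), c k • M k (fun _ => -(ε • z)) = c 0 • M 0 0 := by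
  have hterm : ∀ (k : ℕ) (z : Fin d → ℝ),
      ρ z • c k • M k (fun _ => -(ε • z)) = (c k * (-ε) ^ k) • ρ z • M k fun _ => z :=
    fun k z => by
      have := (M k).map_smul_univ (fun _ => -ε) fun _ => z
      simp only [neg_smul, Finset.prod_const, Finset.card_univ, Fintype.card_fin] at this
      rw [this, smul_smul, smul_comm]
  simp_rw [Finset.smul_sum, hterm]
  have hint : ∀ k, Integrable fun z => (c k * (-ε) ^ k) • ρ z • M k fun _ => z :=
    fun k => (ρ.integrable_smul_multilinear_diag (M k)).smul _
  refine ⟨integrable_finsetSum _ fun k _ => hint k, ?_⟩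
  rw [integral_finsetSum _ fun k _ => hint k, Finset.sum_eq_single 0]
  · have h₀ : ∀ z : Fin d → ℝ, M 0 (fun _ => z) = M 0 0 := fun z =>
      congrArg _ (Subsingleton.elim _ _)
    simp_rw [h₀]
    rw [integral_smul, integral_smul_const, hρ.1]
    simp
  · intro k _ hk
    rw [integral_smul, hρ.integral_smul_multilinear_diag hk, smul_zero]
  · simp

theorem HasUniformPolyGrowth.exists_norm_integral_sub_le {q : ℕ} {g : (Fin d → ℝ) → G}
    (hg : HasUniformPolyGrowth q g) {ρ : SchwartzMap (Fin d → ℝ) ℂ} (hρ : IsMollifier ρ) (p : ℕ) :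
    ∃ C : ℝ, 0 ≤ C ∧ ∀ ε ∈ Set.Ioc (0 : ℝ) 1, ∀ x,
      ‖(∫ z, ρ z • g (x - ε • z)) - g x‖ ≤ C * ε ^ p * (1 + ‖x‖) ^ q := by
  obtain ⟨C, hC, hb⟩ := hg.2 (p + 1)
  refine ⟨C * ∫ z, (1 + ‖z‖) ^ (q + (p + 1)) * ‖ρ z‖, by positivity, fun ε hε x => ?_⟩
  have hε' : |ε| ≤ 1 := by rw [abs_of_pos hε.1]; exact hε.2
  obtain ⟨hTi, hT⟩ := hρ.integral_smul_taylor (fun k => _root_.iteratedFDeriv ℝ k g x)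
    (fun k => (k.factorial : ℝ)⁻¹) ε p
  simp only [Nat.factorial_zero, Nat.cast_one, inv_one, one_smul, iteratedFDeriv_zero_apply] at hT
  conv_lhs => rw [← hT]
  rw [← integral_sub (hg.integrable_smul_comp hε' ρ x) hTi]
  simp_rw [← smul_sub]
  refine (norm_integral_le_of_norm_le
    ((ρ.integrable_one_add_norm_pow_mul_s3 (q + (p + 1))).const_mul
      (C * ε ^ p * (1 + ‖x‖) ^ q)) (Eventually.of_forall fun z => ?_)).trans_eq ?_
  · have hz : ‖-(ε • z)‖ ≤ ε * ‖z‖ := by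
      rw [norm_neg, norm_smul, Real.norm_eq_abs, abs_of_pos hε.1]
    have hz' : ε * ‖z‖ ≤ ‖z‖ := mul_le_of_le_one_left (norm_nonneg _) hε.2
    have key := norm_sub_taylor_le hg.1 x (-(ε • z)) p
      (B := C * ((1 + ‖x‖) ^ q * (1 + ‖z‖) ^ q)) fun t ht => by
        refine (hb _).trans ?_
        gcongr
        refine one_add_norm_add_pow_le q ?_
        rw [norm_smul, Real.norm_eq_abs, abs_of_nonneg ht.1]
        exact (mul_le_of_le_one_left (norm_nonneg _) ht.2).trans (hz.trans hz')
    rw [norm_smul, sub_eq_add_neg x]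
    calc ‖ρ z‖ * _ ≤ ‖ρ z‖ * (C * ((1 + ‖x‖) ^ q * (1 + ‖z‖) ^ q) * ‖-(ε • z)‖ ^ (p + 1)) := by
          gcongr
      _ ≤ ‖ρ z‖ * (C * ((1 + ‖x‖) ^ q * (1 + ‖z‖) ^ q) * (ε ^ p * (1 + ‖z‖) ^ (p + 1))) := by
          gcongr
          calc ‖-(ε • z)‖ ^ (p + 1) ≤ (ε * ‖z‖) ^ (p + 1) := by gcongr
            _ = ε ^ (p + 1) * ‖z‖ ^ (p + 1) := mul_pow _ _ _
            _ ≤ ε ^ p * (1 + ‖z‖) ^ (p + 1) := by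
              have := hε.1.le
              gcongr ?_ * ?_
              · exact pow_le_pow_of_le_one this hε.2 (Nat.le_succ p)
              · gcongr
                linarith
      _ = _ := by ring
  · rw [integral_const_mul]
    ring

end Convolution

theorem integral_mul_scaled {d : ℕ} (f ρ : (Fin d → ℝ) → ℂ) {ε : ℝ} (hε : 0 < ε)
    (x : Fin d → ℝ) :
    ∫ y, f (x - y) * scaled ρ ε y = ∫ z, ρ z • f (x - ε • z) := by
  have h := Measure.integral_comp_inv_smul_of_nonneg volume
    (fun z : Fin d → ℝ => ρ z • f (x - ε • z)) hε.le
  simp only [smul_inv_smul₀ hε.ne', Module.finrank_fin_fun] at h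
  have h' : ∀ y, f (x - y) * scaled ρ ε y = ε ^ (-(d : ℤ)) • (ρ (ε⁻¹ • y) • f (x - y)) := by
    intro y
    rw [scaled, Complex.real_smul, smul_eq_mul]
    ring
  simp_rw [h']
  rw [integral_smul, h, smul_smul, zpow_neg, zpow_natCast, inv_mul_cancel₀ (by positivity),
    one_smul]

theorem mu_neg_le_ofReal {E : Type*} [NormedAddCommGroup E] [NormedSpace ℝ E] {q l : ℕ} {f : E → ℂ}
    {B : ℝ} (h : ∀ i ≤ l, ∀ x, ‖iteratedFDeriv ℝ i f x‖ ≤ B * (1 + ‖x‖) ^ q) :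
    mu (-(q : ℤ)) l f ≤ ENNReal.ofReal B := by
  refine iSup_le fun x => iSup_le fun i => iSup_le fun hi => ENNReal.ofReal_le_ofReal ?_
  rw [zpow_neg, zpow_natCast, inv_mul_le_iff₀ (by positivity), mul_comm]
  exact h i hi x

theorem hasUniformPolyGrowth_of_mu_lt_top {E : Type*} [NormedAddCommGroup E] [NormedSpace ℝ E]
    {q : ℕ} {f : E → ℂ} (hf : ContDiff ℝ ∞ f) (h : ∀ l : ℕ, mu (-(q : ℤ)) l f < ⊤) :
    HasUniformPolyGrowth q f := by
  refine ⟨hf, fun k => ⟨(mu (-(q : ℤ)) k f).toReal, ENNReal.toReal_nonneg, fun x => ?_⟩⟩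
  have h₁ : ENNReal.ofReal ((1 + ‖x‖) ^ (-(q : ℤ)) * ‖iteratedFDeriv ℝ k f x‖) ≤
      mu (-(q : ℤ)) k f :=
    le_iSup_of_le x (le_iSup_of_le k (le_iSup_of_le le_rfl le_rfl))
  have h₂ := (ENNReal.ofReal_le_iff_le_toReal (h k).ne).1 h₁
  rwa [zpow_neg, zpow_natCast, inv_mul_le_iff₀ (by positivity), mul_comm] at h₂

theorem HasUniformPolyGrowth.exists_iteratedFDeriv_convolution_sub_le {d q : ℕ}
    {f : (Fin d → ℝ) → ℂ} (hf : HasUniformPolyGrowth q f) {ρ : SchwartzMap (Fin d → ℝ) ℂ}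
    (hρ : IsMollifier ρ) (l p : ℕ) :
    ∃ C > (0 : ℝ), ∀ ε ∈ Set.Ioc (0 : ℝ) 1, ∀ i ≤ l, ∀ x,
      ‖_root_.iteratedFDeriv ℝ i (fun x => (∫ z, ρ z • f (x - ε • z)) - f x) x‖ ≤
        C * ε ^ p * (1 + ‖x‖) ^ q := by
  choose C hC hb using fun i => (hf.iteratedFDeriv i).exists_norm_integral_sub_le hρ p
  refine ⟨1 + ∑ i ∈ Finset.range (l + 1), C i,
    add_pos_of_pos_of_nonneg one_pos (Finset.sum_nonneg fun i _ => hC i), fun ε hε i hi x => ?_⟩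
  have hT := hf.hasFTaylorSeriesUpTo_integral (abs_le.2 ⟨by linarith [hε.1], hε.2⟩) ρ
  have hi' : (i : ℕ∞ω) ≤ ∞ := by exact_mod_cast le_top
  rw [fun_iteratedFDeriv_sub_apply (hT.contDiff.contDiffAt.of_le hi') (hf.1.contDiffAt.of_le hi'),
    ← hT.eq_iteratedFDeriv hi']
  refine (hb i ε hε x).trans ?_
  have := hε.1
  gcongr
  have := Finset.single_le_sum (f := C) (fun i _ => hC i) (Finset.mem_range.2 (Nat.lt_succ_of_le hi))
  linarith

/-- for `f ∈ O_C(ℝ^d)`, the net `(f ∗ ρ_ε − f)_ε` belongs to `N_τ(ℝ^d)`. -/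
theorem stmt3 (d : ℕ) (hd : 1 ≤ d)
    (ρ : SchwartzMap (Fin d → ℝ) ℂ) (hρ : IsMollifier ρ)
    (f : (Fin d → ℝ) → ℂ) (hf : ContDiff ℝ (⊤ : ℕ∞) f)
    (hOC : ∃ q : ℕ, ∀ l : ℕ, mu (-(q:ℤ)) l f < ⊤) :
    IsNtauNet (fun ε x => (∫ y : Fin d → ℝ, f (x - y) * scaled ⇑ρ ε y) - f x) := by
  obtain ⟨q, hq⟩ := hOC
  have hfg := hasUniformPolyGrowth_of_mu_lt_top hf hq
  have hconv : ∀ ε ∈ Set.Ioc (0 : ℝ) 1,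
      (fun x => (∫ y : Fin d → ℝ, f (x - y) * scaled ⇑ρ ε y) - f x) =
        fun x => (∫ z, ρ z • f (x - ε • z)) - f x := fun ε hε => by
    simp_rw [integral_mul_scaled f ρ hε.1]
  refine ⟨fun ε hε => ?_, fun l => ⟨q, fun p => ?_⟩⟩
  · beta_reduce
    rw [hconv ε hε]
    refine ⟨(hfg.hasFTaylorSeriesUpTo_integral
      (abs_le.2 ⟨by linarith [hε.1], hε.2⟩) ρ).contDiff.sub hf, fun l => ⟨q, ?_⟩⟩
    obtain ⟨C, -, hb⟩ := hfg.exists_iteratedFDeriv_convolution_sub_le hρ l 0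
    exact (mu_neg_le_ofReal (hb ε hε)).trans_lt ENNReal.ofReal_lt_top
  · obtain ⟨C, hC, hb⟩ := hfg.exists_iteratedFDeriv_convolution_sub_le hρ l p
    refine ⟨C, hC, 1, one_pos, fun ε h₀ h₁ => ?_⟩
    beta_reduce
    rw [hconv ε ⟨h₀, h₁⟩]
    exact mu_neg_le_ofReal (hb ε ⟨h₀, h₁⟩)
end

section
/- Let m, n ≥ 1, let (H_ε)_{ε∈(0,1]} be a net in E_τ(ℝ^{m+n}) and (f_ε)_{ε∈(0,1]} a net in E_S(ℝ^n). Then for each ε ∈ (0,1] and x ∈ ℝ^m the function y ↦ H_ε(x,y) f_ε(y) is integrable on ℝ^n, the function x ↦ ∫_{ℝ^n} H_ε(x,y) f_ε(y) dy is smooth on ℝ^m with temperate growth, and the net (x ↦ ∫_{ℝ^n} H_ε(x,y) f_ε(y) dy)_{ε∈(0,1]} belongs to E_τ(ℝ^m). -/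
open MeasureTheory Filter

section ParametricIntegral

variable {E F W Y : Type*} [NormedAddCommGroup E] [NormedSpace ℝ E]
  [NormedAddCommGroup F] [NormedSpace ℝ F] [NormedAddCommGroup W] [NormedSpace ℝ W]

/-- Differentiation under the integral sign to all orders, for a smooth integrand whose derivatives
are locally dominated by integrable functions. -/
theorem hasFTaylorSeriesUpTo_integral_of_dominated [CompleteSpace W] [MeasurableSpace Y]
    {ν : Measure Y} {K : E → Y → W}
    (hK : ∀ y, ContDiff ℝ (⊤ : ℕ∞) (fun x => K x y))
    (hmeas : ∀ (i : ℕ) (x : E),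
      AEStronglyMeasurable (fun y => iteratedFDeriv ℝ i (fun x => K x y) x) ν)
    (hdom : ∀ (i : ℕ) (x₀ : E), ∃ s ∈ nhds x₀, ∃ b : Y → ℝ, Integrable b ν ∧
      ∀ y, ∀ x ∈ s, ‖iteratedFDeriv ℝ i (fun x => K x y) x‖ ≤ b y) :
    HasFTaylorSeriesUpTo (⊤ : ℕ∞) (fun x => ∫ y, K x y ∂ν)
      (fun x i => ∫ y, iteratedFDeriv ℝ i (fun x => K x y) x ∂ν) := by
  have hint : ∀ (i : ℕ) (x : E),
      Integrable (fun y => iteratedFDeriv ℝ i (fun x => K x y) x) ν := by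
    intro i x
    obtain ⟨s, hs, b, hb, hle⟩ := hdom i x
    exact hb.mono' (hmeas i x) (ae_of_all _ fun y => hle y x (mem_of_mem_nhds hs))
  have hderiv : ∀ (i : ℕ) (x : E),
      HasFDerivAt (fun x => ∫ y, iteratedFDeriv ℝ i (fun x => K x y) x ∂ν)
        (∫ y, iteratedFDeriv ℝ (i + 1) (fun x => K x y) x ∂ν).curryLeft x := by
    intro i x
    obtain ⟨s, hs, b, hb, hle⟩ := hdom (i + 1) x
    let e : (E [×(i + 1)]→L[ℝ] W) ≃ₗᵢ[ℝ] (E →L[ℝ] E [×i]→L[ℝ] W) :=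
      continuousMultilinearCurryLeftEquiv ℝ (fun _ : Fin (i + 1) => E) W
    have hcurry : (∫ y, iteratedFDeriv ℝ (i + 1) (fun x => K x y) x ∂ν).curryLeft =
        ∫ y, (iteratedFDeriv ℝ (i + 1) (fun x => K x y) x).curryLeft ∂ν := by
      have h := ContinuousLinearMap.integral_comp_comm (𝕜 := ℝ) (Fₗ := E →L[ℝ] E [×i]→L[ℝ] W)
        e.toContinuousLinearEquiv.toContinuousLinearMap (hint (i + 1) x)
      exact h.symm
    rw [hcurry]
    refine hasFDerivAt_integral_of_dominated_of_fderiv_le (bound := b)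
      (F' := fun x y => (iteratedFDeriv ℝ (i + 1) (fun x => K x y) x).curryLeft) hs
      (Eventually.of_forall fun x => hmeas i x) (hint i x) ?_ ?_ hb ?_
    · exact e.continuous.comp_aestronglyMeasurable (hmeas (i + 1) x)
    · refine ae_of_all _ fun y x hx => ?_
      exact (e.norm_map _).trans_le (hle y x hx)
    · refine ae_of_all _ fun y x _ => ?_
      exact ((hK y).ftaylorSeries).fderiv i (by exact_mod_cast ENat.natCast_lt_top i) x
  refine ⟨fun x => ?_, fun i _ x => hderiv i x, fun i _ => ?_⟩
  · rw [ContinuousMultilinearMap.curry0_apply,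
      ContinuousMultilinearMap.integral_apply (hint 0 x)]
    simp
  · exact continuous_iff_continuousAt.2 fun x => (hderiv i x).continuousAt

/-- The derivatives of a partial function are restrictions of the full derivatives. -/
theorem iteratedFDeriv_comp_prodMk_left {G : E × F → W} (hG : ContDiff ℝ (⊤ : ℕ∞) G)
    (i : ℕ) (x : E) (y : F) :
    iteratedFDeriv ℝ i (fun x => G (x, y)) x =
      (iteratedFDeriv ℝ i G (x, y)).compContinuousLinearMap
        fun _ => ContinuousLinearMap.inl ℝ E F := by
  have hshift : ContDiff ℝ (⊤ : ℕ∞) (fun z : E × F => G (z + (0, y))) := by fun_prop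
  have heq : (fun x => G (x, y)) =
      (fun z : E × F => G (z + (0, y))) ∘ ContinuousLinearMap.inl ℝ E F := by
    ext x
    simp
  rw [heq, (ContinuousLinearMap.inl ℝ E F).iteratedFDeriv_comp_right hshift x
    (by exact_mod_cast le_top), iteratedFDeriv_comp_add_right]
  simp

theorem norm_iteratedFDeriv_comp_prodMk_left_le {G : E × F → W} (hG : ContDiff ℝ (⊤ : ℕ∞) G)
    (i : ℕ) (x : E) (y : F) :
    ‖iteratedFDeriv ℝ i (fun x => G (x, y)) x‖ ≤ ‖iteratedFDeriv ℝ i G (x, y)‖ := by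
  rw [iteratedFDeriv_comp_prodMk_left hG]
  refine (ContinuousMultilinearMap.norm_compContinuousLinearMap_le _ _).trans ?_
  refine mul_le_of_le_one_right (norm_nonneg _) ?_
  exact Finset.prod_le_one (fun _ _ => norm_nonneg _)
    fun _ _ => ContinuousLinearMap.norm_inl_le_one ℝ E F

theorem continuous_iteratedFDeriv_comp_prodMk_left {G : E × F → W}
    (hG : ContDiff ℝ (⊤ : ℕ∞) G) (i : ℕ) (x : E) :
    Continuous (fun y => iteratedFDeriv ℝ i (fun x => G (x, y)) x) := by
  simp_rw [iteratedFDeriv_comp_prodMk_left hG]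
  exact (ContinuousMultilinearMap.compContinuousLinearMapL
    (F := W) fun _ : Fin i => ContinuousLinearMap.inl ℝ E F).continuous.comp
    ((hG.continuous_iteratedFDeriv (by exact_mod_cast le_top)).comp (by fun_prop))

end ParametricIntegral

section Seminorms

variable {E : Type*} [NormedAddCommGroup E] [NormedSpace ℝ E]

theorem mu_le_ofReal_iff {r : ℤ} {l : ℕ} {f : E → ℂ} {C : ℝ} (hC : 0 ≤ C) :
    mu r l f ≤ ENNReal.ofReal C ↔
      ∀ i ≤ l, ∀ x, (1 + ‖x‖) ^ r * ‖iteratedFDeriv ℝ i f x‖ ≤ C := by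
  simp only [mu, iSup_le_iff, ENNReal.ofReal_le_ofReal_iff hC]
  exact ⟨fun h i hi x => h x i hi, fun h x i hi => h i hi x⟩

theorem mu_neg_le_ofReal_iff {q l : ℕ} {f : E → ℂ} {C : ℝ} (hC : 0 ≤ C) :
    mu (-(q : ℤ)) l f ≤ ENNReal.ofReal C ↔
      ∀ i ≤ l, ∀ x, ‖iteratedFDeriv ℝ i f x‖ ≤ C * (1 + ‖x‖) ^ q := by
  rw [mu_le_ofReal_iff hC]
  refine forall₃_congr fun i _ x => ?_
  rw [zpow_neg, zpow_natCast, inv_mul_le_iff₀ (by positivity), mul_comm]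

theorem mu_zero_le_ofReal_iff {q : ℕ} {f : E → ℂ} {C : ℝ} (hC : 0 ≤ C) :
    mu (q : ℤ) 0 f ≤ ENNReal.ofReal C ↔ ∀ x, ‖f x‖ ≤ C * ((1 + ‖x‖) ^ q)⁻¹ := by
  rw [mu_le_ofReal_iff hC]
  simp only [Nat.le_zero, forall_eq, zpow_natCast, norm_iteratedFDeriv_zero]
  refine forall_congr' fun x => ?_
  rw [← div_eq_mul_inv, le_div_iff₀ (by positivity), mul_comm]

end Seminorms

section KernelOperator

theorem one_add_norm_prodMk_le {E F : Type*} [NormedAddCommGroup E] [NormedAddCommGroup F]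
    (x : E) (y : F) :
    1 + ‖(x, y)‖ ≤ (1 + ‖x‖) * (1 + ‖y‖) := by
  have hx := norm_nonneg x
  have hy := norm_nonneg y
  rw [Prod.norm_mk]
  rcases max_cases ‖x‖ ‖y‖ with ⟨h, _⟩ | ⟨h, _⟩ <;> rw [h] <;> nlinarith [mul_nonneg hx hy]

variable {E F : Type*} [NormedAddCommGroup E] [NormedSpace ℝ E]
  [NormedAddCommGroup F] [NormedSpace ℝ F]

theorem iteratedFDeriv_kernel_mul {G : E × F → ℂ} (hG : ContDiff ℝ (⊤ : ℕ∞) G) (g : F → ℂ)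
    (i : ℕ) (x : E) (y : F) :
    iteratedFDeriv ℝ i (fun x => G (x, y) * g y) x =
      g y • iteratedFDeriv ℝ i (fun x => G (x, y)) x := by
  have hGy : ContDiff ℝ i (fun x => G (x, y)) :=
    (hG.comp (contDiff_prodMk_left y)).of_le (by exact_mod_cast le_top)
  simp_rw [mul_comm _ (g y), ← smul_eq_mul]
  exact iteratedFDeriv_const_smul_apply' (a := g y) hGy.contDiffAt

theorem norm_iteratedFDeriv_kernel_mul_le {G : E × F → ℂ} (hG : ContDiff ℝ (⊤ : ℕ∞) G)
    {g : F → ℂ} {i q k : ℕ} {C D : ℝ} (hC : 0 ≤ C) (hD : 0 ≤ D)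
    (hGC : ∀ z, ‖iteratedFDeriv ℝ i G z‖ ≤ C * (1 + ‖z‖) ^ q)
    (hgD : ∀ y, ‖g y‖ ≤ D * ((1 + ‖y‖) ^ (q + k))⁻¹) (x : E) (y : F) :
    ‖iteratedFDeriv ℝ i (fun x => G (x, y) * g y) x‖ ≤
      C * D * (1 + ‖x‖) ^ q * ((1 + ‖y‖) ^ k)⁻¹ := by
  have hy : 0 < 1 + ‖y‖ := by positivity
  rw [iteratedFDeriv_kernel_mul hG, norm_smul]
  calc ‖g y‖ * ‖iteratedFDeriv ℝ i (fun x => G (x, y)) x‖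
      ≤ (D * ((1 + ‖y‖) ^ (q + k))⁻¹) * (C * ((1 + ‖x‖) * (1 + ‖y‖)) ^ q) := by
        refine mul_le_mul (hgD y) ?_ (norm_nonneg _) (by positivity)
        refine (norm_iteratedFDeriv_comp_prodMk_left_le hG i x y).trans ((hGC _).trans ?_)
        gcongr
        exact one_add_norm_prodMk_le x y
    _ = C * D * (1 + ‖x‖) ^ q * ((1 + ‖y‖) ^ k)⁻¹ := by
        rw [mul_pow, pow_add]
        field_simp

theorem exists_norm_iteratedFDeriv_kernel_mul_le {G : E × F → ℂ} (hG : TemperateGrowth' G)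
    {g : F → ℂ} (hg : SchwartzLike g) (i k : ℕ) :
    ∃ (q : ℕ) (A : ℝ), 0 ≤ A ∧ ∀ (x : E) (y : F),
      ‖iteratedFDeriv ℝ i (fun x => G (x, y) * g y) x‖ ≤
        A * (1 + ‖x‖) ^ q * ((1 + ‖y‖) ^ k)⁻¹ := by
  obtain ⟨q, hq⟩ := hG.2 i
  exact ⟨q, _, mul_nonneg ENNReal.toReal_nonneg ENNReal.toReal_nonneg,
    norm_iteratedFDeriv_kernel_mul_le hG.1 ENNReal.toReal_nonneg ENNReal.toReal_nonneg
      ((mu_neg_le_ofReal_iff ENNReal.toReal_nonneg).1 (ENNReal.ofReal_toReal hq.ne).ge i le_rfl)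
      ((mu_zero_le_ofReal_iff ENNReal.toReal_nonneg).1
        (ENNReal.ofReal_toReal (hg.2 (q + k) 0).ne).ge)⟩

variable [FiniteDimensional ℝ F] [MeasurableSpace F] [BorelSpace F]
  (ν : Measure F)

theorem aestronglyMeasurable_iteratedFDeriv_kernel_mul {G : E × F → ℂ}
    (hG : ContDiff ℝ (⊤ : ℕ∞) G) {g : F → ℂ} (hg : Continuous g) (i : ℕ) (x : E) :
    AEStronglyMeasurable (fun y => iteratedFDeriv ℝ i (fun x => G (x, y) * g y) x) ν := by
  simp_rw [iteratedFDeriv_kernel_mul hG]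
  exact (hg.smul (continuous_iteratedFDeriv_comp_prodMk_left hG i x)).aestronglyMeasurable

variable [ν.IsAddHaarMeasure]

theorem integrable_inv_one_add_norm_pow :
    Integrable (fun y : F => ((1 + ‖y‖) ^ (Module.finrank ℝ F + 1))⁻¹) ν := by
  have h := integrable_one_add_norm (μ := ν) (E := F)
    (r := ((Module.finrank ℝ F + 1 : ℕ) : ℝ)) (by push_cast; linarith)
  refine h.congr (ae_of_all _ fun y => ?_)
  simp only
  rw [Real.rpow_neg (by positivity), Real.rpow_natCast]

theorem integrable_kernel_mul {G : E × F → ℂ} (hG : TemperateGrowth' G) {g : F → ℂ}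
    (hg : SchwartzLike g) (x : E) : Integrable (fun y => G (x, y) * g y) ν := by
  obtain ⟨q, A, -, hA⟩ :=
    exists_norm_iteratedFDeriv_kernel_mul_le hG hg 0 (Module.finrank ℝ F + 1)
  simp only [norm_iteratedFDeriv_zero] at hA
  exact ((integrable_inv_one_add_norm_pow ν).const_mul _).mono'
    ((hG.1.continuous.comp (by fun_prop)).mul hg.1.continuous).aestronglyMeasurable
    (ae_of_all _ (hA x))

theorem hasFTaylorSeriesUpTo_kernel {G : E × F → ℂ} (hG : TemperateGrowth' G) {g : F → ℂ}
    (hg : SchwartzLike g) :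
    HasFTaylorSeriesUpTo (⊤ : ℕ∞) (fun x => ∫ y, G (x, y) * g y ∂ν)
      (fun x i => ∫ y, iteratedFDeriv ℝ i (fun x => G (x, y) * g y) x ∂ν) := by
  refine hasFTaylorSeriesUpTo_integral_of_dominated
    (fun y => (hG.1.comp (contDiff_prodMk_left y)).mul contDiff_const)
    (aestronglyMeasurable_iteratedFDeriv_kernel_mul ν hG.1 hg.1.continuous) fun i x₀ => ?_
  obtain ⟨q, A, hA0, hA⟩ :=
    exists_norm_iteratedFDeriv_kernel_mul_le hG hg i (Module.finrank ℝ F + 1)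
  refine ⟨Metric.ball x₀ 1, Metric.ball_mem_nhds _ one_pos, _,
    (integrable_inv_one_add_norm_pow ν).const_mul (A * (1 + (‖x₀‖ + 1)) ^ q),
    fun y x hx => (hA x y).trans ?_⟩
  gcongr
  linarith [norm_le_norm_add_norm_sub' x x₀, mem_ball_iff_norm.1 hx]

/-- The kernel operator is bounded from a Schwartz seminorm to a temperate-growth seminorm. -/
theorem mu_integral_kernel_le {G : E × F → ℂ} (hG : TemperateGrowth' G) {g : F → ℂ}
    (hg : SchwartzLike g) {q l : ℕ} {C D : ℝ} (hC : 0 ≤ C) (hD : 0 ≤ D)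
    (hGC : mu (-(q : ℤ)) l G ≤ ENNReal.ofReal C)
    (hgD : mu ((q + (Module.finrank ℝ F + 1) : ℕ) : ℤ) 0 g ≤ ENNReal.ofReal D) :
    mu (-(q : ℤ)) l (fun x => ∫ y, G (x, y) * g y ∂ν) ≤
      ENNReal.ofReal (C * D * ∫ y : F, ((1 + ‖y‖) ^ (Module.finrank ℝ F + 1))⁻¹ ∂ν) := by
  have hI : 0 ≤ ∫ y : F, ((1 + ‖y‖) ^ (Module.finrank ℝ F + 1))⁻¹ ∂ν :=
    integral_nonneg fun y => by positivity
  rw [mu_neg_le_ofReal_iff hC] at hGC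
  rw [mu_zero_le_ofReal_iff hD] at hgD
  rw [mu_neg_le_ofReal_iff (by positivity)]
  intro i hi x
  rw [← (hasFTaylorSeriesUpTo_kernel ν hG hg).eq_iteratedFDeriv (by exact_mod_cast le_top) x]
  refine (norm_integral_le_of_norm_le ((integrable_inv_one_add_norm_pow ν).const_mul _)
    (ae_of_all _ fun y =>
      norm_iteratedFDeriv_kernel_mul_le hG.1 hC hD (hGC i hi) hgD x y)).trans_eq ?_
  rw [integral_const_mul]
  ring

theorem temperateGrowth_integral_kernel {G : E × F → ℂ} (hG : TemperateGrowth' G) {g : F → ℂ}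
    (hg : SchwartzLike g) : TemperateGrowth' (fun x => ∫ y, G (x, y) * g y ∂ν) := by
  refine ⟨(hasFTaylorSeriesUpTo_kernel ν hG hg).contDiff, fun l => ?_⟩
  obtain ⟨q, hq⟩ := hG.2 l
  exact ⟨q, (mu_integral_kernel_le ν hG hg ENNReal.toReal_nonneg ENNReal.toReal_nonneg
    (ENNReal.ofReal_toReal hq.ne).ge
    (ENNReal.ofReal_toReal (hg.2 _ 0).ne).ge).trans_lt ENNReal.ofReal_lt_top⟩

theorem isEtauNet_integral_kernel {H : ℝ → E × F → ℂ} (hH : IsEtauNet H) {f : ℝ → F → ℂ}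
    (hf : IsESNet f) : IsEtauNet (fun ε x => ∫ y, H ε (x, y) * f ε y ∂ν) := by
  refine ⟨fun ε hε => temperateGrowth_integral_kernel ν (hH.1 ε hε) (hf.1 ε hε), fun l => ?_⟩
  obtain ⟨q, N, C, hC, η, hη, hHC⟩ := hH.2 l
  obtain ⟨M, D, hD, θ, hθ, hfD⟩ := hf.2 (q + (Module.finrank ℝ F + 1)) 0
  set I := ∫ y : F, ((1 + ‖y‖) ^ (Module.finrank ℝ F + 1))⁻¹ ∂ν with hI_def
  have hI : 0 ≤ I := integral_nonneg fun y => by positivity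
  refine ⟨q, N + M, C * D * (I + 1), by positivity, min 1 (min η θ), by positivity,
    fun ε hε hle => ?_⟩
  obtain ⟨h1, h2, h3⟩ := by simpa only [le_min_iff] using hle
  refine (mu_integral_kernel_le ν (hH.1 ε ⟨hε, h1⟩) (hf.1 ε ⟨hε, h1⟩) (by positivity)
    (by positivity) (hHC ε hε h2) (hfD ε hε h3)).trans (ENNReal.ofReal_le_ofReal ?_)
  rw [← hI_def]
  have hpow : ε ^ (-((N + M : ℕ) : ℤ)) = ε ^ (-(N : ℤ)) * ε ^ (-(M : ℤ)) := by
    rw [← zpow_add₀ hε.ne']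
    congr 1
    push_cast
    ring
  simp only [hpow]
  calc C * ε ^ (-(N : ℤ)) * (D * ε ^ (-(M : ℤ))) * I
      ≤ C * ε ^ (-(N : ℤ)) * (D * ε ^ (-(M : ℤ))) * (I + 1) := by
        gcongr
        linarith
    _ = C * D * (I + 1) * (ε ^ (-(N : ℤ)) * ε ^ (-(M : ℤ))) := by ring

end KernelOperator

/-- a kernel net in `E_τ(ℝ^{m+n})` applied to a net in `E_S(ℝ^n)` gives a
well-defined net of integrals belonging to `E_τ(ℝ^m)`. -/
theorem stmt7 (m n : ℕ) (hm : 1 ≤ m) (hn : 1 ≤ n)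
    (H : ℝ → ((Fin m → ℝ) × (Fin n → ℝ)) → ℂ) (hH : IsEtauNet H)
    (f : ℝ → (Fin n → ℝ) → ℂ) (hf : IsESNet f) :
    (∀ ε ∈ Set.Ioc (0:ℝ) 1, ∀ x : Fin m → ℝ,
      MeasureTheory.Integrable (fun y : Fin n → ℝ => H ε (x, y) * f ε y)) ∧
    IsEtauNet (fun ε (x : Fin m → ℝ) => ∫ y : Fin n → ℝ, H ε (x, y) * f ε y) := by
  exact ⟨fun ε hε => integrable_kernel_mul volume (hH.1 ε hε) (hf.1 ε hε),
    isEtauNet_integral_kernel volume hH hf⟩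
end
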